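/- arXiv:2401.00322 — 5 statements merged into one kernel-verified Lean document; each statement's English description precedes it below -/
import Mathlib

section
/- Let 𝒯 be a backward linear transfer on P(X) × P(X) with finite Mather constant c(𝒯) = inf_μ 𝒯(μ, μ), and let 𝒯_n denote the n-fold inf-convolution of 𝒯 with itself. Then c(𝒯) = lim_{n → ∞} (1/n) inf_{(μ,ν)} 𝒯_n(μ, ν). -/
open MeasureTheory Filter Topology
open scoped ENNReal

/-- The `n`-fold inf-convolution iterates of a transfer functional:
`iterT 𝒯 n` is `𝒯_{n+1} = 𝒯 ⋆ ⋯ ⋆ 𝒯` (`n+1` factors), where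
`(𝒯 ⋆ 𝒮)(μ, ν) = inf_σ { 𝒯(μ, σ) + 𝒮(σ, ν) }`. -/
noncomputable def iterT {X : Type*} [MeasurableSpace X]
    (𝒯 : ProbabilityMeasure X → ProbabilityMeasure X → EReal) :
    ℕ → ProbabilityMeasure X → ProbabilityMeasure X → EReal
  | 0 => 𝒯
  | n + 1 => fun μ ν => ⨅ σ : ProbabilityMeasure X, 𝒯 μ σ + iterT 𝒯 n σ ν

/-!
The diagonal gives `𝒯_n(μ, μ) ≤ n 𝒯(μ, μ)`, hence `(1/n) inf 𝒯_n ≤ c(𝒯)`. Conversely, along a path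
`μ = σ₀, σ₁, …, σ_n = ν` of total cost less than `n a`, joint convexity bounds by `a` the cost
`𝒯(α, β)` of the averages `α` of `σ₀, …, σ_{n-1}` and `β` of `σ₁, …, σ_n`. Telescoping,
`n α + ν = n β + μ`, so `α` and `β` have the same weak* limits as `n → ∞`; by compactness and lower
semicontinuity a common limit `ρ` satisfies `𝒯(ρ, ρ) ≤ a`, that is `c(𝒯) ≤ a`.
-/

/-- Joint convexity of a functional of two probability measures. The convex combinations are
written in `Measure X`, whose scalars are `ℝ≥0∞`, because probability measures carry no convex
structure of their own. -/
def IsJointlyConvex {X : Type*} [MeasurableSpace X]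
    (𝒯 : ProbabilityMeasure X → ProbabilityMeasure X → EReal) : Prop :=
  ∀ (μ₁ ν₁ μ₂ ν₂ μ ν : ProbabilityMeasure X) (t : ℝ), 0 ≤ t → t ≤ 1 →
    (μ : Measure X) =
      ENNReal.ofReal t • (μ₁ : Measure X) + ENNReal.ofReal (1 - t) • (μ₂ : Measure X) →
    (ν : Measure X) =
      ENNReal.ofReal t • (ν₁ : Measure X) + ENNReal.ofReal (1 - t) • (ν₂ : Measure X) →
    𝒯 μ ν ≤ (t : EReal) * 𝒯 μ₁ ν₁ + ((1 - t : ℝ) : EReal) * 𝒯 μ₂ ν₂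

lemma exists_real_add_eq_of_add_lt_coe {x y : EReal} (hx : x ≠ ⊥) (hy : y ≠ ⊥) {a : ℝ}
    (h : x + y < a) : ∃ u v : ℝ, x < u ∧ y < v ∧ u + v = a := by
  obtain ⟨u, hxu, hu⟩ := EReal.lt_iff_exists_real_btwn.1
    ((EReal.lt_sub_iff_add_lt (.inl hy) (.inr hx)).2 h)
  have hyu : y + u < a := by simpa only [add_comm] using EReal.add_lt_of_lt_sub hu
  refine ⟨u, a - u, hxu, ?_, add_sub_cancel u a⟩
  rw [EReal.coe_sub]
  exact (EReal.lt_sub_iff_add_lt (.inl (EReal.coe_ne_bot u)) (.inl (EReal.coe_ne_top u))).2 hyu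

lemma coe_inv_mul_eq_div_natCast (n : ℕ) (x : EReal) :
    ((((n : ℝ) + 1)⁻¹ : ℝ) : EReal) * x = x / ((n + 1 : ℕ) : EReal) := by
  rw [EReal.div_eq_inv_mul, EReal.coe_inv]
  norm_cast

section Measurable

variable {X : Type*} [MeasurableSpace X]
  {𝒯 : ProbabilityMeasure X → ProbabilityMeasure X → EReal}

lemma iterT_self_le_nsmul (𝒯 : ProbabilityMeasure X → ProbabilityMeasure X → EReal) (n : ℕ)
    (μ : ProbabilityMeasure X) : iterT 𝒯 n μ μ ≤ (n + 1) • 𝒯 μ μ := by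
  induction n with
  | zero => simp [iterT]
  | succ n ih =>
    rw [succ_nsmul']
    exact (iInf_le _ μ).trans (add_le_add le_rfl ih)

lemma nsmul_le_iterT {x : EReal} (hx : ∀ μ ν, x ≤ 𝒯 μ ν) (n : ℕ) (μ ν : ProbabilityMeasure X) :
    (n + 1) • x ≤ iterT 𝒯 n μ ν := by
  induction n generalizing μ with
  | zero => simpa [iterT] using hx μ ν
  | succ n ih =>
    rw [succ_nsmul']
    exact le_iInf fun σ => add_le_add (hx μ σ) (ih σ)

lemma iterT_ne_bot {m : ℝ} (hm : ∀ μ ν, (m : EReal) ≤ 𝒯 μ ν) (n : ℕ)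
    (μ ν : ProbabilityMeasure X) : iterT 𝒯 n μ ν ≠ ⊥ := by
  refine ne_bot_of_le_ne_bot ?_ (nsmul_le_iterT hm n μ ν)
  rw [← EReal.coe_nsmul]
  exact EReal.coe_ne_bot _

lemma exists_convexCombination (μ ν : ProbabilityMeasure X) {t : ℝ} (h0 : 0 ≤ t) (h1 : t ≤ 1) :
    ∃ ρ : ProbabilityMeasure X, (ρ : Measure X) =
      ENNReal.ofReal t • (μ : Measure X) + ENNReal.ofReal (1 - t) • (ν : Measure X) := by
  refine ⟨⟨_, ⟨?_⟩⟩, rfl⟩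
  simp [← ENNReal.ofReal_add h0 (sub_nonneg.2 h1)]

lemma succ_nsmul_convexCombination (μ ν : Measure X) (n : ℕ) :
    (n + 1) • (ENNReal.ofReal (1 / (n + 1)) • μ + ENNReal.ofReal (1 - 1 / (n + 1)) • ν) =
      μ + n • ν := by
  have hn : (0 : ℝ) < n + 1 := by positivity
  have scale (s : ℝ) (ρ : Measure X) :
      (n + 1) • ENNReal.ofReal s • ρ = ENNReal.ofReal ((n + 1) * s) • ρ := by
    rw [← Nat.cast_smul_eq_nsmul ℝ≥0∞, smul_smul, ENNReal.ofReal_mul hn.le]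
    norm_cast
  rw [nsmul_add, scale, scale, mul_one_div_cancel hn.ne', mul_one_sub,
    mul_one_div_cancel hn.ne', add_sub_cancel_right, ENNReal.ofReal_one, one_smul,
    ENNReal.ofReal_natCast, Nat.cast_smul_eq_nsmul]

lemma IsJointlyConvex.exists_weighted_average (hconv : IsJointlyConvex 𝒯) (n : ℕ)
    {μ₁ ν₁ μ₂ ν₂ : ProbabilityMeasure X} {u v : ℝ} (hu : 𝒯 μ₁ ν₁ ≤ u) (hv : 𝒯 μ₂ ν₂ ≤ v) :
    ∃ μ ν : ProbabilityMeasure X, 𝒯 μ ν ≤ ((u + n * v) / (n + 1) : ℝ) ∧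
      (n + 1) • (μ : Measure X) = μ₁ + n • (μ₂ : Measure X) ∧
      (n + 1) • (ν : Measure X) = ν₁ + n • (ν₂ : Measure X) := by
  have hn : (0 : ℝ) < n + 1 := by positivity
  have ht0 : (0 : ℝ) ≤ 1 / (n + 1) := by positivity
  have ht1 : (1 : ℝ) / (n + 1) ≤ 1 := (div_le_one hn).2 (by simp)
  obtain ⟨μ, hμ⟩ := exists_convexCombination μ₁ μ₂ ht0 ht1
  obtain ⟨ν, hν⟩ := exists_convexCombination ν₁ ν₂ ht0 ht1
  refine ⟨μ, ν, ?_, by rw [hμ, succ_nsmul_convexCombination],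
    by rw [hν, succ_nsmul_convexCombination]⟩
  calc 𝒯 μ ν
    _ ≤ ((1 / (n + 1) : ℝ) : EReal) * 𝒯 μ₁ ν₁ + ((1 - 1 / (n + 1) : ℝ) : EReal) * 𝒯 μ₂ ν₂ :=
      hconv _ _ _ _ _ _ _ ht0 ht1 hμ hν
    _ ≤ ((1 / (n + 1) : ℝ) : EReal) * u + ((1 - 1 / (n + 1) : ℝ) : EReal) * v :=
      add_le_add (mul_le_mul_of_nonneg_left hu (EReal.coe_nonneg.2 ht0))
        (mul_le_mul_of_nonneg_left hv (EReal.coe_nonneg.2 (sub_nonneg.2 ht1)))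
    _ = ((u + n * v) / (n + 1) : ℝ) := by
      rw [← EReal.coe_mul, ← EReal.coe_mul, ← EReal.coe_add]
      congr 1
      field_simp
      ring

lemma IsJointlyConvex.exists_path_averages (hconv : IsJointlyConvex 𝒯) {m : ℝ}
    (hm : ∀ μ ν, (m : EReal) ≤ 𝒯 μ ν) (n : ℕ) {μ ν : ProbabilityMeasure X} {a : ℝ}
    (h : iterT 𝒯 n μ ν < a) :
    ∃ α β : ProbabilityMeasure X, 𝒯 α β ≤ (a / (n + 1) : ℝ) ∧
      (n + 1) • (α : Measure X) + ν = (n + 1) • (β : Measure X) + μ := by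
  induction n generalizing μ a with
  | zero => exact ⟨μ, ν, by simpa [iterT] using h.le, by simp [add_comm]⟩
  | succ n ih =>
    obtain ⟨σ, hσ⟩ := iInf_lt_iff.1 h
    obtain ⟨u, v, hu, hv, rfl⟩ := exists_real_add_eq_of_add_lt_coe
      (ne_bot_of_le_ne_bot (EReal.coe_ne_bot m) (hm μ σ)) (iterT_ne_bot hm n σ ν) hσ
    obtain ⟨α, β, hαβ, hshift⟩ := ih hv
    obtain ⟨α', β', hαβ', hα', hβ'⟩ := hconv.exists_weighted_average (n + 1) hu.le hαβ
    refine ⟨α', β', ?_, ?_⟩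
    · convert hαβ' using 3
      push_cast
      field_simp
    · calc (n + 1 + 1) • (α' : Measure X) + ν
        _ = μ + ((n + 1) • (α : Measure X) + ν) := by rw [hα', add_assoc]
        _ = μ + ((n + 1) • (β : Measure X) + σ) := by rw [hshift]
        _ = (n + 1 + 1) • (β' : Measure X) + μ := by rw [hβ']; abel

end Measurable

section Topological

variable {X : Type*} [TopologicalSpace X] [MeasurableSpace X] [OpensMeasurableSpace X]

lemma natCast_mul_abs_integral_sub_le {n : ℕ} {α β μ ν : ProbabilityMeasure X}
    (h : n • (α : Measure X) + ν = n • (β : Measure X) + μ) (f : BoundedContinuousFunction X ℝ) :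
    n * |∫ x, f x ∂(β : Measure X) - ∫ x, f x ∂(α : Measure X)| ≤ 2 * ‖f‖ := by
  have integral_nsmul_add (ρ τ : ProbabilityMeasure X) :
      ∫ x, f x ∂(n • (ρ : Measure X) + (τ : Measure X)) =
        n * ∫ x, f x ∂(ρ : Measure X) + ∫ x, f x ∂(τ : Measure X) := by
    rw [← Nat.cast_smul_eq_nsmul ℝ≥0∞, integral_add_measure
      ((f.integrable _).smul_measure (ENNReal.natCast_ne_top n)) (f.integrable _),
      integral_smul_measure, ENNReal.toReal_natCast, smul_eq_mul]
  have telescope : n * (∫ x, f x ∂(β : Measure X) - ∫ x, f x ∂(α : Measure X)) =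
      ∫ x, f x ∂(ν : Measure X) - ∫ x, f x ∂(μ : Measure X) := by
    linear_combination integral_nsmul_add α ν - integral_nsmul_add β μ -
      congrArg (fun ρ : Measure X => ∫ x, f x ∂ρ) h
  calc n * |∫ x, f x ∂(β : Measure X) - ∫ x, f x ∂(α : Measure X)|
    _ = |∫ x, f x ∂(ν : Measure X) - ∫ x, f x ∂(μ : Measure X)| := by
      rw [← telescope, abs_mul, Nat.abs_cast]
    _ ≤ |∫ x, f x ∂(ν : Measure X)| + |∫ x, f x ∂(μ : Measure X)| := abs_sub _ _
    _ ≤ ‖f‖ + ‖f‖ := add_le_add (f.norm_integral_le_norm _) (f.norm_integral_le_norm _)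
    _ = 2 * ‖f‖ := (two_mul _).symm

variable {ι : Type*} {l : Filter ι} {N : ι → ℕ} {α β μ ν : ι → ProbabilityMeasure X}

lemma tendsto_of_nsmul_add_eq {ρ : ProbabilityMeasure X} (hN : Tendsto N l atTop)
    (h : ∀ i, N i • (α i : Measure X) + ν i = N i • (β i : Measure X) + μ i)
    (hα : Tendsto α l (𝓝 ρ)) : Tendsto β l (𝓝 ρ) := by
  rw [ProbabilityMeasure.tendsto_iff_forall_integral_tendsto] at hα ⊢
  intro f
  have hbound : ∀ᶠ i in l,
      ‖∫ x, f x ∂(β i : Measure X) - ∫ x, f x ∂(α i : Measure X)‖ ≤ 2 * ‖f‖ / N i := by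
    filter_upwards [hN.eventually_gt_atTop 0] with i hi
    rw [le_div_iff₀' (Nat.cast_pos.2 hi)]
    exact natCast_mul_abs_integral_sub_le (h i) f
  have hdiff : Tendsto
      (fun i => ∫ x, f x ∂(β i : Measure X) - ∫ x, f x ∂(α i : Measure X)) l (𝓝 0) :=
    squeeze_zero_norm' hbound
      (tendsto_const_nhds.div_atTop (tendsto_natCast_atTop_atTop.comp hN))
  simpa using hdiff.add (hα f)

variable [CompactSpace (ProbabilityMeasure X)]
  {𝒯 : ProbabilityMeasure X → ProbabilityMeasure X → EReal}

lemma exists_self_le_of_nsmul_add_eq [l.NeBot]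
    (hlsc : LowerSemicontinuous
      (fun p : ProbabilityMeasure X × ProbabilityMeasure X => 𝒯 p.1 p.2))
    (hN : Tendsto N l atTop)
    (h : ∀ i, N i • (α i : Measure X) + ν i = N i • (β i : Measure X) + μ i)
    {a : EReal} (ha : ∀ i, 𝒯 (α i) (β i) ≤ a) : ∃ ρ, 𝒯 ρ ρ ≤ a := by
  obtain ⟨ρ, hρ⟩ := exists_clusterPt_of_compactSpace (map α l)
  obtain ⟨U, hUl, hα⟩ := mapClusterPt_iff_ultrafilter.1 hρ
  have hβ : Tendsto β U (𝓝 ρ) := tendsto_of_nsmul_add_eq (hN.mono_left hUl) h hα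
  exact ⟨ρ, (hlsc.isClosed_preimage a).mem_of_tendsto (hα.prodMk_nhds hβ)
    (Eventually.of_forall ha)⟩

lemma IsJointlyConvex.eventually_nsmul_le_iterT (hconv : IsJointlyConvex 𝒯)
    (hlsc : LowerSemicontinuous
      (fun p : ProbabilityMeasure X × ProbabilityMeasure X => 𝒯 p.1 p.2))
    {m : ℝ} (hm : ∀ μ ν, (m : EReal) ≤ 𝒯 μ ν) {a : ℝ} (ha : (a : EReal) < ⨅ μ, 𝒯 μ μ) :
    ∀ᶠ n in atTop, ∀ μ ν, (n + 1) • (a : EReal) ≤ iterT 𝒯 n μ ν := by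
  by_contra hnot
  obtain ⟨φ, hφ, hlt⟩ := extraction_of_frequently_atTop (not_eventually.1 hnot)
  push Not at hlt
  choose μ ν hlt using hlt
  have havg (k : ℕ) : ∃ α β : ProbabilityMeasure X, 𝒯 α β ≤ a ∧
      (φ k + 1) • (α : Measure X) + ν k = (φ k + 1) • (β : Measure X) + μ k := by
    have hk : iterT 𝒯 (φ k) (μ k) (ν k) < (((φ k + 1) * a : ℝ) : EReal) := by
      convert hlt k using 1
      rw [← EReal.coe_nsmul, nsmul_eq_mul, Nat.cast_succ]
    have hpos : (φ k + 1 : ℝ) ≠ 0 := by positivity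
    simpa only [mul_div_cancel_left₀ a hpos] using hconv.exists_path_averages hm (φ k) hk
  choose α β hle hshift using havg
  obtain ⟨ρ, hρ⟩ := exists_self_le_of_nsmul_add_eq hlsc
    ((tendsto_add_atTop_nat 1).comp hφ.tendsto_atTop) hshift hle
  exact ha.not_ge ((iInf_le _ ρ).trans hρ)

end Topological

theorem stmt4_general {X : Type*} [TopologicalSpace X] [T2Space X] [CompactSpace X]
    [MeasurableSpace X] [BorelSpace X]
    (𝒯 : ProbabilityMeasure X → ProbabilityMeasure X → EReal)
    (hbdd : ∃ m : ℝ, ∀ μ ν, (m : EReal) ≤ 𝒯 μ ν)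
    (hlsc : LowerSemicontinuous
      (fun p : ProbabilityMeasure X × ProbabilityMeasure X => 𝒯 p.1 p.2))
    (hconv : IsJointlyConvex 𝒯) :
    Tendsto
      (fun n : ℕ => ((((n : ℝ) + 1)⁻¹ : ℝ) : EReal) *
        ⨅ p : ProbabilityMeasure X × ProbabilityMeasure X, iterT 𝒯 n p.1 p.2)
      atTop (𝓝 (⨅ μ, 𝒯 μ μ)) := by
  obtain ⟨m, hm⟩ := hbdd
  have hpos (n : ℕ) : (0 : EReal) < ((n + 1 : ℕ) : EReal) := by exact_mod_cast n.succ_pos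
  have htop (n : ℕ) : ((n + 1 : ℕ) : EReal) ≠ ⊤ := EReal.natCast_ne_top _
  simp only [coe_inv_mul_eq_div_natCast]
  refine tendsto_order.2 ⟨fun b hb => ?_, fun b hb => Eventually.of_forall fun n => ?_⟩
  · obtain ⟨a, hba, ha⟩ := EReal.lt_iff_exists_real_btwn.1 hb
    filter_upwards [hconv.eventually_nsmul_le_iterT hlsc hm ha] with n hn
    refine hba.trans_le ((EReal.le_div_iff_mul_le (hpos n) (htop n)).2 (le_iInf fun p => ?_))
    simpa only [EReal.nsmul_eq_mul, mul_comm] using hn p.1 p.2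
  · refine (le_iInf fun μ => ?_).trans_lt hb
    rw [EReal.div_le_iff_le_mul (hpos n) (htop n), ← EReal.nsmul_eq_mul]
    exact (iInf_le _ (μ, μ)).trans (iterT_self_le_nsmul 𝒯 n μ)

/-- For a backward linear transfer `𝒯` on `P(X) × P(X)` with finite
Mather constant `c(𝒯) = inf_μ 𝒯(μ, μ)`, one has
`c(𝒯) = lim_{n → ∞} (1/n) inf_{(μ,ν)} 𝒯_n(μ, ν)`. -/
theorem stmt4 {X : Type*} [MetricSpace X] [CompactSpace X] [MeasurableSpace X] [BorelSpace X]
    (𝒯 : ProbabilityMeasure X → ProbabilityMeasure X → EReal)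
    (hproper : ∃ μ ν, 𝒯 μ ν ≠ ⊤)
    (hbdd : ∃ m : ℝ, ∀ μ ν, (m : EReal) ≤ 𝒯 μ ν)
    (hlsc : LowerSemicontinuous
      (fun p : ProbabilityMeasure X × ProbabilityMeasure X => 𝒯 p.1 p.2))
    (hconv : ∀ (μ₁ ν₁ μ₂ ν₂ μ ν : ProbabilityMeasure X) (t : ℝ), 0 ≤ t → t ≤ 1 →
      (μ : Measure X) =
        ENNReal.ofReal t • (μ₁ : Measure X) + ENNReal.ofReal (1 - t) • (μ₂ : Measure X) →
      (ν : Measure X) =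
        ENNReal.ofReal t • (ν₁ : Measure X) + ENNReal.ofReal (1 - t) • (ν₂ : Measure X) →
      𝒯 μ ν ≤ (t : EReal) * 𝒯 μ₁ ν₁ + ((1 - t : ℝ) : EReal) * 𝒯 μ₂ ν₂)
    (hfin_top : (⨅ μ, 𝒯 μ μ) ≠ ⊤) (hfin_bot : (⨅ μ, 𝒯 μ μ) ≠ ⊥) :
    Tendsto
      (fun n : ℕ => ((((n : ℝ) + 1)⁻¹ : ℝ) : EReal) *
        ⨅ p : ProbabilityMeasure X × ProbabilityMeasure X, iterT 𝒯 n p.1 p.2)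
      atTop (nhds (⨅ μ, 𝒯 μ μ)) :=
  stmt4_general 𝒯 hbdd hlsc hconv
end

section
/- Let 𝒯 be a backward linear transfer on P(X) × P(X) with Kantorovich operator T and finite Mather constant c(𝒯), and let μ̄ be a minimal measure (𝒯(μ̄, μ̄) = c(𝒯)). Then for each g ∈ C(X), lim_{n → ∞} (1/n) ∫_X T^n g dμ̄ = −c(𝒯). -/
open MeasureTheory Filter Topology
open scoped ENNReal

open scoped NNReal BoundedContinuousFunction

/-!
A path `μ, σ₁, …, σₙ, ν` of total cost below `(n + 1) d` can be averaged over its `n + 1` edges: by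
joint convexity the averages `α` of the starting points and `β` of the end points satisfy
`𝒯 α β ≤ d`, and `β - α = (ν - μ) / (n + 1)`. If such paths existed for arbitrarily large `n`,
compactness and lower semicontinuity would give a measure `ρ` with `𝒯 ρ ρ ≤ d`. So for `d < c`
eventually `𝒯_{n+1} ≥ (n + 1) d` everywhere, while `𝒯_{n+1}(μ̄, μ̄) ≤ (n + 1) c`. Hence
`sup_ν {∫ g dν - 𝒯_{n+1}(μ̄, ν)}` lies between `-(n + 1) c + O(1)` and `-(n + 1) d + O(1)`.
-/

lemma tendsto_div_of_sub_mul_le_of_le_sub_mul {ι : Type*} {l : Filter ι} {s u : ι → ℝ}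
    {A B c : ℝ} (hs : Tendsto s l atTop) (hlow : ∀ᶠ i in l, A - s i * c ≤ u i)
    (hup : ∀ d < c, ∀ᶠ i in l, u i ≤ B - s i * d) :
    Tendsto (fun i => u i / s i) l (𝓝 (-c)) := by
  refine tendsto_order.2 ⟨fun a ha => ?_, fun a ha => ?_⟩
  · filter_upwards [hs.eventually_gt_atTop 0, hlow,
      (hs.atTop_mul_const (sub_pos.2 ha)).eventually_gt_atTop (-A)] with i hpos hi hbig
    rw [lt_div_iff₀ hpos]
    linarith
  · obtain ⟨d, had, hdc⟩ := exists_between (neg_lt.1 ha)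
    filter_upwards [hs.eventually_gt_atTop 0, hup d hdc,
      (hs.atTop_mul_const (neg_lt_iff_pos_add'.1 had)).eventually_gt_atTop B] with i hpos hi hbig
    rw [div_lt_iff₀ hpos]
    linarith

section ERealSupremum

variable {ι : Type*} {a : ι → ℝ} {F : ι → EReal} {K : ℝ}

lemma sub_le_of_coe_eq_iSup_sub (hK : (K : EReal) = ⨆ i, (a i : EReal) - F i) {i : ι} {b : ℝ}
    (hb : F i ≤ b) : a i - b ≤ K := by
  rw [← EReal.coe_le_coe_iff, hK, EReal.coe_sub]
  exact (EReal.sub_le_sub le_rfl hb).trans (le_iSup (fun i => (a i : EReal) - F i) i)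

lemma le_sub_of_coe_eq_iSup_sub (hK : (K : EReal) = ⨆ i, (a i : EReal) - F i) {A b : ℝ}
    (hA : ∀ i, a i ≤ A) (hb : ∀ i, (b : EReal) ≤ F i) : K ≤ A - b := by
  rw [← EReal.coe_le_coe_iff, hK, EReal.coe_sub]
  exact iSup_le fun i => EReal.sub_le_sub (EReal.coe_le_coe (hA i)) (hb i)

lemma exists_coe_eq_and_lt_sub_of_add_lt {x y : EReal} {S : ℝ} (hx : x ≠ ⊥) (hy : y ≠ ⊥)
    (h : x + y < S) : ∃ r : ℝ, x = r ∧ y < (S - r : ℝ) := by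
  have hx' : x ≠ ⊤ := by
    rintro rfl
    simp [EReal.top_add_of_ne_bot hy] at h
  lift x to ℝ using ⟨hx', hx⟩
  refine ⟨x, rfl, ?_⟩
  rw [EReal.coe_sub]
  exact EReal.lt_sub_iff_add_lt (by simp) (by simp) |>.2 (by rwa [add_comm])

end ERealSupremum

section Averaging

variable {X : Type*} [MeasurableSpace X]
  {𝒯 : ProbabilityMeasure X → ProbabilityMeasure X → EReal}

/-- Joint convexity of a functional on pairs of probability measures. Convex combinations are
expressed by identities between the underlying measures. -/
def JointlyConvex (𝒯 : ProbabilityMeasure X → ProbabilityMeasure X → EReal) : Prop :=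
  ∀ (μ₁ ν₁ μ₂ ν₂ μ ν : ProbabilityMeasure X) (t : ℝ), 0 ≤ t → t ≤ 1 →
    (μ : Measure X) =
      ENNReal.ofReal t • (μ₁ : Measure X) + ENNReal.ofReal (1 - t) • (μ₂ : Measure X) →
    (ν : Measure X) =
      ENNReal.ofReal t • (ν₁ : Measure X) + ENNReal.ofReal (1 - t) • (ν₂ : Measure X) →
    𝒯 μ ν ≤ (t : EReal) * 𝒯 μ₁ ν₁ + ((1 - t : ℝ) : EReal) * 𝒯 μ₂ ν₂

lemma exists_probabilityMeasure_eq_smul_add_smul (μ ν : ProbabilityMeasure X) {s t : ℝ≥0}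
    (hst : s + t = 1) :
    ∃ ρ : ProbabilityMeasure X, (ρ : Measure X) = s • (μ : Measure X) + t • (ν : Measure X) := by
  refine ⟨⟨s • (μ : Measure X) + t • (ν : Measure X), ⟨?_⟩⟩, rfl⟩
  simp [← ENNReal.coe_add, hst]

lemma JointlyConvex.le_of_eq_smul_add_smul (hconv : JointlyConvex 𝒯)
    {μ₁ ν₁ μ₂ ν₂ μ ν : ProbabilityMeasure X} {s t : ℝ≥0} (hst : s + t = 1)
    (hμ : (μ : Measure X) = s • (μ₁ : Measure X) + t • (μ₂ : Measure X))
    (hν : (ν : Measure X) = s • (ν₁ : Measure X) + t • (ν₂ : Measure X)) :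
    𝒯 μ ν ≤ (s : ℝ) * 𝒯 μ₁ ν₁ + (t : ℝ) * 𝒯 μ₂ ν₂ := by
  have ht : (t : ℝ) = 1 - s := by
    rw [eq_sub_iff_add_eq', ← NNReal.coe_add, hst, NNReal.coe_one]
  have hs : (s : ℝ) ≤ 1 := sub_nonneg.1 (ht ▸ t.coe_nonneg)
  rw [ht]
  apply hconv μ₁ ν₁ μ₂ ν₂ μ ν s s.coe_nonneg hs
  all_goals rwa [← ht, ENNReal.ofReal_coe_nnreal, ENNReal.ofReal_coe_nnreal]

lemma JointlyConvex.exists_weighted_average_le (hconv : JointlyConvex 𝒯)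
    {μ₁ ν₁ μ₂ ν₂ : ProbabilityMeasure X} {a b : ℝ} (ha : 𝒯 μ₁ ν₁ ≤ a) (hb : 𝒯 μ₂ ν₂ ≤ b)
    {s t : ℝ≥0} (hst : s + t ≠ 0) :
    ∃ μ ν : ProbabilityMeasure X, 𝒯 μ ν ≤ ((s * a + t * b) / (s + t) : ℝ) ∧
      (s + t) • (μ : Measure X) = s • (μ₁ : Measure X) + t • (μ₂ : Measure X) ∧
      (s + t) • (ν : Measure X) = s • (ν₁ : Measure X) + t • (ν₂ : Measure X) := by
  have hsum : s / (s + t) + t / (s + t) = 1 := by rw [← add_div, div_self hst]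
  obtain ⟨μ, hμ⟩ := exists_probabilityMeasure_eq_smul_add_smul μ₁ μ₂ hsum
  obtain ⟨ν, hν⟩ := exists_probabilityMeasure_eq_smul_add_smul ν₁ ν₂ hsum
  have hclear (ρ₁ ρ₂ : Measure X) :
      (s + t) • ((s / (s + t)) • ρ₁ + (t / (s + t)) • ρ₂) = s • ρ₁ + t • ρ₂ := by
    rw [smul_add, smul_smul, smul_smul, mul_div_cancel₀ _ hst, mul_div_cancel₀ _ hst]
  refine ⟨μ, ν, ?_, by rw [hμ, hclear], by rw [hν, hclear]⟩
  calc 𝒯 μ ν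
      ≤ ((s / (s + t) : ℝ≥0) : ℝ) * 𝒯 μ₁ ν₁ + ((t / (s + t) : ℝ≥0) : ℝ) * 𝒯 μ₂ ν₂ :=
        hconv.le_of_eq_smul_add_smul hsum hμ hν
    _ ≤ ((s / (s + t) : ℝ≥0) : ℝ) * a + ((t / (s + t) : ℝ≥0) : ℝ) * b := by
        gcongr
    _ = ((s * a + t * b) / (s + t) : ℝ) := by
        rw [← EReal.coe_mul, ← EReal.coe_mul, ← EReal.coe_add, EReal.coe_eq_coe_iff]
        push_cast
        ring

lemma mul_le_iterT {m : ℝ} (hm : ∀ μ ν, (m : EReal) ≤ 𝒯 μ ν) (n : ℕ)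
    (μ ν : ProbabilityMeasure X) : (((n + 1) * m : ℝ) : EReal) ≤ iterT 𝒯 n μ ν := by
  induction n generalizing μ with
  | zero => simpa [iterT] using hm μ ν
  | succ n ih =>
    refine le_iInf fun σ => ?_
    calc (((n + 1 : ℕ) + 1) * m : ℝ)
        = ((m + (n + 1) * m : ℝ) : EReal) := congrArg Real.toEReal (by push_cast; ring)
      _ ≤ 𝒯 μ σ + iterT 𝒯 n σ ν := by
        rw [EReal.coe_add]
        exact add_le_add (hm μ σ) (ih σ)

lemma iterT_self_le {μ : ProbabilityMeasure X} {c : ℝ} (hμ : 𝒯 μ μ ≤ c) (n : ℕ) :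
    iterT 𝒯 n μ μ ≤ ((n + 1) * c : ℝ) := by
  induction n with
  | zero => simpa [iterT] using hμ
  | succ n ih =>
    calc iterT 𝒯 (n + 1) μ μ
        ≤ 𝒯 μ μ + iterT 𝒯 n μ μ := iInf_le _ μ
      _ ≤ (c + (n + 1) * c : ℝ) := by
        rw [EReal.coe_add]
        exact add_le_add hμ ih
      _ = (((n + 1 : ℕ) + 1) * c : ℝ) := congrArg Real.toEReal (by push_cast; ring)

lemma exists_eq_coe_and_iterT_lt_of_iterT_succ_lt
    (hbdd : ∃ m : ℝ, ∀ μ ν, (m : EReal) ≤ 𝒯 μ ν) {n : ℕ} {μ ν : ProbabilityMeasure X} {S : ℝ}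
    (h : iterT 𝒯 (n + 1) μ ν < S) :
    ∃ (σ : ProbabilityMeasure X) (r : ℝ), 𝒯 μ σ = r ∧ iterT 𝒯 n σ ν < (S - r : ℝ) := by
  obtain ⟨m, hm⟩ := hbdd
  obtain ⟨σ, hσ⟩ := iInf_lt_iff.1 h
  exact ⟨σ, exists_coe_eq_and_lt_sub_of_add_lt (ne_bot_of_le_ne_bot (EReal.coe_ne_bot _) (hm μ σ))
    (ne_bot_of_le_ne_bot (EReal.coe_ne_bot _) (mul_le_iterT hm n σ ν)) hσ⟩

lemma JointlyConvex.exists_le_div_of_iterT_lt (hconv : JointlyConvex 𝒯)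
    (hbdd : ∃ m : ℝ, ∀ μ ν, (m : EReal) ≤ 𝒯 μ ν) {n : ℕ} {μ ν : ProbabilityMeasure X} {S : ℝ}
    (h : iterT 𝒯 n μ ν < S) :
    ∃ α β : ProbabilityMeasure X, 𝒯 α β ≤ (S / (n + 1) : ℝ) ∧
      (n + 1 : ℝ≥0) • (α : Measure X) + ν = μ + (n + 1 : ℝ≥0) • (β : Measure X) := by
  induction n generalizing μ S with
  | zero => exact ⟨μ, ν, by simpa [iterT] using h.le, by simp⟩
  | succ n ih =>
    obtain ⟨σ, r, hr, hσ⟩ := exists_eq_coe_and_iterT_lt_of_iterT_succ_lt hbdd h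
    obtain ⟨α, β, hαβ, hbal⟩ := ih hσ
    obtain ⟨α', β', hαβ', hα', hβ'⟩ :=
      hconv.exists_weighted_average_le hr.le hαβ (s := 1) (t := n + 1) (by positivity)
    have hweight : ((n + 1 : ℕ) + 1 : ℝ≥0) = 1 + (n + 1) := by push_cast; ring
    refine ⟨α', β', hαβ'.trans_eq (congrArg Real.toEReal ?_), ?_⟩
    · push_cast
      field_simp
      ring
    · calc ((n + 1 : ℕ) + 1 : ℝ≥0) • (α' : Measure X) + ν
          = μ + ((n + 1 : ℝ≥0) • (α : Measure X) + ν) := by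
            rw [hweight, hα', one_smul, add_assoc]
        _ = μ + ((n + 1 : ℕ) + 1 : ℝ≥0) • (β' : Measure X) := by
            rw [hbal, hweight, hβ', one_smul]

end Averaging

section WeakConvergence

variable {X : Type*} [TopologicalSpace X] [MeasurableSpace X]

lemma abs_integral_sub_le_of_smul_add_eq [OpensMeasurableSpace X] {μ ν α β : Measure X}
    [IsProbabilityMeasure μ] [IsProbabilityMeasure ν] [IsFiniteMeasure α] [IsFiniteMeasure β]
    {t : ℝ≥0} (ht : 0 < t) (h : t • α + ν = μ + t • β) (f : X →ᵇ ℝ) :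
    |∫ x, f x ∂α - ∫ x, f x ∂β| ≤ 2 * ‖f‖ / t := by
  have hint : t * ∫ x, f x ∂α + ∫ x, f x ∂ν = ∫ x, f x ∂μ + t * ∫ x, f x ∂β := by
    have := congrArg (fun ρ => ∫ x, f x ∂ρ) h
    simpa only [integral_add_measure (f.integrable _) (f.integrable _),
      integral_smul_nnreal_measure, NNReal.smul_def, smul_eq_mul] using this
  have ht' : (0 : ℝ) < t := ht
  have hdiff : ∫ x, f x ∂α - ∫ x, f x ∂β = (∫ x, f x ∂μ - ∫ x, f x ∂ν) / t := by
    rw [eq_div_iff ht'.ne']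
    linarith
  rw [hdiff, abs_div, abs_of_pos ht', two_mul]
  gcongr
  exact (abs_sub _ _).trans <|
    add_le_add (f.norm_integral_le_norm μ) (f.norm_integral_le_norm ν)

lemma tendsto_of_tendsto_integral_sub [OpensMeasurableSpace X] {ι : Type*} {l : Filter ι}
    {α β : ι → ProbabilityMeasure X} {μ : ProbabilityMeasure X} (hα : Tendsto α l (𝓝 μ))
    (hαβ : ∀ f : X →ᵇ ℝ, Tendsto (fun i => ∫ x, f x ∂(α i : Measure X) -
      ∫ x, f x ∂(β i : Measure X)) l (𝓝 0)) :
    Tendsto β l (𝓝 μ) := by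
  rw [ProbabilityMeasure.tendsto_iff_forall_integral_tendsto] at hα ⊢
  intro f
  simpa only [sub_sub_cancel, sub_zero] using (hα f).sub (hαβ f)

variable [T2Space X] [CompactSpace X] [BorelSpace X]

lemma exists_apply_self_le_of_tendsto_integral_sub {γ : Type*} [LinearOrder γ]
    {F : ProbabilityMeasure X × ProbabilityMeasure X → γ} (hF : LowerSemicontinuous F) {d : γ}
    {ι : Type*} {l : Filter ι} [l.NeBot] {α β : ι → ProbabilityMeasure X}
    (hd : ∀ᶠ i in l, F (α i, β i) ≤ d)
    (hαβ : ∀ f : X →ᵇ ℝ, Tendsto (fun i => ∫ x, f x ∂(α i : Measure X) -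
      ∫ x, f x ∂(β i : Measure X)) l (𝓝 0)) :
    ∃ μ, F (μ, μ) ≤ d := by
  have hU : (Ultrafilter.of l : Filter ι) ≤ l := Ultrafilter.of_le l
  have hα : Tendsto α (Ultrafilter.of l) (𝓝 ((Ultrafilter.of l).map α).lim) :=
    ((Ultrafilter.of l).map α).le_nhds_lim
  have hβ := tendsto_of_tendsto_integral_sub hα fun f => (hαβ f).mono_left hU
  exact ⟨_, (hF.isClosed_preimage d).mem_of_tendsto (hα.prodMk_nhds hβ) (hd.filter_mono hU)⟩

variable {𝒯 : ProbabilityMeasure X → ProbabilityMeasure X → EReal}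

lemma exists_apply_self_le_of_frequently_iterT_lt
    (hbdd : ∃ m : ℝ, ∀ μ ν, (m : EReal) ≤ 𝒯 μ ν)
    (hlsc : LowerSemicontinuous
      (fun p : ProbabilityMeasure X × ProbabilityMeasure X => 𝒯 p.1 p.2))
    (hconv : JointlyConvex 𝒯) {d : ℝ}
    (h : ∃ᶠ n : ℕ in atTop, ∃ μ ν, iterT 𝒯 n μ ν < ((n + 1) * d : ℝ)) :
    ∃ μ, 𝒯 μ μ ≤ d := by
  obtain ⟨φ, hφ, hlt⟩ := extraction_of_frequently_atTop h
  choose μ ν hμν using hlt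
  choose α β hle hbal using fun k => hconv.exists_le_div_of_iterT_lt hbdd (hμν k)
  refine exists_apply_self_le_of_tendsto_integral_sub hlsc (l := atTop) (α := α) (β := β)
    (.of_forall fun k => ?_) fun f => ?_
  · simpa only [mul_div_cancel_left₀ d (Nat.cast_add_one_ne_zero (R := ℝ) (φ k))] using hle k
  · refine squeeze_zero_norm
      (fun k => abs_integral_sub_le_of_smul_add_eq (by positivity) (hbal k) f) ?_
    exact (tendsto_const_div_atTop_nhds_zero_nat (2 * ‖f‖)).comp
      ((tendsto_add_atTop_nat 1).comp hφ.tendsto_atTop) |>.congr fun k => by simp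

lemma eventually_mul_le_iterT (hbdd : ∃ m : ℝ, ∀ μ ν, (m : EReal) ≤ 𝒯 μ ν)
    (hlsc : LowerSemicontinuous
      (fun p : ProbabilityMeasure X × ProbabilityMeasure X => 𝒯 p.1 p.2))
    (hconv : JointlyConvex 𝒯) {d : ℝ} (hd : (d : EReal) < ⨅ μ, 𝒯 μ μ) :
    ∀ᶠ n : ℕ in atTop, ∀ μ ν, (((n + 1) * d : ℝ) : EReal) ≤ iterT 𝒯 n μ ν := by
  by_contra h
  simp only [not_eventually, not_forall, not_le] at h
  obtain ⟨μ, hμ⟩ := exists_apply_self_le_of_frequently_iterT_lt hbdd hlsc hconv h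
  exact (hd.trans_le (iInf_le _ μ)).not_ge hμ

/-- `K n` stands for `∫ T^{n+1} g dμ̄`, expressed through the duality formula. -/
theorem stmt5_general (hbdd : ∃ m : ℝ, ∀ μ ν, (m : EReal) ≤ 𝒯 μ ν)
    (hlsc : LowerSemicontinuous
      (fun p : ProbabilityMeasure X × ProbabilityMeasure X => 𝒯 p.1 p.2))
    (hconv : JointlyConvex 𝒯) {c : ℝ} (hc : (c : EReal) = ⨅ μ, 𝒯 μ μ)
    {μbar : ProbabilityMeasure X} (hmin : 𝒯 μbar μbar = (c : EReal)) {g : C(X, ℝ)} {K : ℕ → ℝ}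
    (hK : ∀ n, (K n : EReal) =
      ⨆ ν : ProbabilityMeasure X, ((∫ x, g x ∂(ν : Measure X) : ℝ) : EReal) - iterT 𝒯 n μbar ν) :
    Tendsto (fun n : ℕ => K n / ((n : ℝ) + 1)) atTop (𝓝 (-c)) := by
  have hg (ν : ProbabilityMeasure X) : ∫ x, g x ∂(ν : Measure X) ≤ ‖g‖ :=
    (le_abs_self _).trans <| by
      simpa using (BoundedContinuousFunction.mkOfCompact g).norm_integral_le_norm (ν : Measure X)
  refine tendsto_div_of_sub_mul_le_of_le_sub_mul (A := ∫ x, g x ∂(μbar : Measure X)) (B := ‖g‖)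
    (tendsto_atTop_add_const_right _ 1 tendsto_natCast_atTop_atTop)
    (.of_forall fun n => sub_le_of_coe_eq_iSup_sub (hK n) (iterT_self_le hmin.le n))
    fun d hd => ?_
  have hd' : (d : EReal) < ⨅ μ, 𝒯 μ μ := hc ▸ EReal.coe_lt_coe hd
  filter_upwards [eventually_mul_le_iterT hbdd hlsc hconv hd'] with n hn
  exact le_sub_of_coe_eq_iSup_sub (hK n) hg (hn μbar)

end WeakConvergence

/-- Let `𝒯` be a backward linear transfer with Kantorovich operators
`Tn n = T^{n+1}` (the Kantorovich operator of `𝒯_{n+1}`, given by the duality hypothesis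
`hdual`), finite Mather constant `c`, and `μ̄` a minimal measure (`𝒯(μ̄, μ̄) = c`). Then for
each `g ∈ C(X)`, `(1/n) ∫_X T^n g dμ̄ → −c`. -/
theorem stmt5 {X : Type*} [MetricSpace X] [CompactSpace X] [MeasurableSpace X] [BorelSpace X]
    (𝒯 : ProbabilityMeasure X → ProbabilityMeasure X → EReal)
    (hproper : ∃ μ ν, 𝒯 μ ν ≠ ⊤)
    (hbdd : ∃ m : ℝ, ∀ μ ν, (m : EReal) ≤ 𝒯 μ ν)
    (hlsc : LowerSemicontinuous
      (fun p : ProbabilityMeasure X × ProbabilityMeasure X => 𝒯 p.1 p.2))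
    (hconv : ∀ (μ₁ ν₁ μ₂ ν₂ μ ν : ProbabilityMeasure X) (t : ℝ), 0 ≤ t → t ≤ 1 →
      (μ : Measure X) =
        ENNReal.ofReal t • (μ₁ : Measure X) + ENNReal.ofReal (1 - t) • (μ₂ : Measure X) →
      (ν : Measure X) =
        ENNReal.ofReal t • (ν₁ : Measure X) + ENNReal.ofReal (1 - t) • (ν₂ : Measure X) →
      𝒯 μ ν ≤ (t : EReal) * 𝒯 μ₁ ν₁ + ((1 - t : ℝ) : EReal) * 𝒯 μ₂ ν₂)
    (c : ℝ) (hc : (c : EReal) = ⨅ μ, 𝒯 μ μ)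
    (μbar : ProbabilityMeasure X) (hmin : 𝒯 μbar μbar = (c : EReal))
    (Tn : ℕ → C(X, ℝ) → X → ℝ)
    (hInt : ∀ (n : ℕ) (g : C(X, ℝ)), Integrable (Tn n g) (μbar : Measure X))
    (hdual : ∀ (n : ℕ) (g : C(X, ℝ)) (μ : ProbabilityMeasure X),
      (((∫ x, Tn n g x ∂(μ : Measure X)) : ℝ) : EReal) =
        ⨆ ν : ProbabilityMeasure X,
          (((∫ x, g x ∂(ν : Measure X)) : ℝ) : EReal) - iterT 𝒯 n μ ν) :
    ∀ g : C(X, ℝ),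
      Tendsto (fun n : ℕ => (∫ x, Tn n g x ∂(μbar : Measure X)) / ((n : ℝ) + 1))
        atTop (nhds (-c)) := by
  intro g
  exact stmt5_general hbdd hlsc hconv hc hmin fun n => hdual n g μbar
end

section
/- Let 𝒯 be an idempotent backward linear transfer on P(X) × P(X), i.e., 𝒯 = 𝒯 ⋆ 𝒯 where ⋆ is inf-convolution. Then its Mather constant is zero: inf_{μ ∈ P(X)} 𝒯(μ, μ) = 0, and the set 𝒩 = {μ : 𝒯(μ, μ) = 0} is non-empty. -/
open MeasureTheory
open scoped ENNReal

/-!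
Subadditivity `𝒯(μ, μ) ≤ 2 𝒯(μ, μ)` makes the diagonal nonnegative. Conversely, if
`𝒯(μ, ν) < c`, idempotence gives `σ` with `𝒯(μ, σ) + 𝒯(σ, ν) < c`, and by convexity the
midpoints `μ' = (μ + σ)/2` and `ν' = (σ + ν)/2` satisfy `𝒯(μ', ν') < c/2` and
`μ' - ν' = (μ - ν)/2`. Iterating, cost and difference both tend to zero, and a weak* limit point
of the pairs is a diagonal point at which lower semicontinuity forces `𝒯 ≤ 0`.
-/

open Filter Topology
open scoped BoundedContinuousFunction

theorem ereal_nonneg_of_le_add_self {a : EReal} (hbot : a ≠ ⊥) (h : a ≤ a + a) : 0 ≤ a := by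
  induction a with
  | bot => exact absurd rfl hbot
  | top => exact le_top
  | coe a => norm_cast at h ⊢; linarith

theorem ereal_half_mul (a : EReal) : ((1 / 2 : ℝ) : EReal) * a = a / 2 := by
  rw [EReal.coe_div, EReal.coe_one, EReal.mul_comm, EReal.mul_div, mul_one]
  rfl

theorem ereal_half_mul_add_half_mul (a b : EReal) :
    ((1 / 2 : ℝ) : EReal) * a + ((1 - 1 / 2 : ℝ) : EReal) * b = (a + b) / 2 := by
  rw [sub_half, ereal_half_mul, ereal_half_mul, EReal.add_div_of_nonneg_right zero_le_two]

section InfConvolution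

variable {α β γ : Type*}

/-- The inf-convolution `S ⋆ T` of two cost functions, with values in the extended reals
(where `⊤ + ⊥ = ⊥`). -/
noncomputable def infConv (S : α → β → EReal) (T : β → γ → EReal) (x : α) (z : γ) : EReal :=
  ⨅ y, (S x y + T y z)

theorem infConv_le_add (S : α → β → EReal) (T : β → γ → EReal) (x : α) (y : β) (z : γ) :
    infConv S T x z ≤ S x y + T y z :=
  iInf_le _ y

theorem infConv_lt_iff {S : α → β → EReal} {T : β → γ → EReal} {x : α} {z : γ} {c : EReal} :
    infConv S T x z < c ↔ ∃ y, S x y + T y z < c :=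
  iInf_lt_iff

theorem diag_nonneg_of_le_infConv {T : α → α → EReal} {x : α} (hbot : T x x ≠ ⊥)
    (h : T x x ≤ infConv T T x x) : 0 ≤ T x x :=
  ereal_nonneg_of_le_add_self hbot (h.trans (infConv_le_add T T x x x))

end InfConvolution

theorem le_of_lowerSemicontinuousAt_of_tendsto {ι α γ : Type*} [TopologicalSpace α]
    [TopologicalSpace γ] [LinearOrder γ] [DenselyOrdered γ] [OrderClosedTopology γ]
    {f : α → γ} {a : α} {c : γ} {l : Filter ι} [l.NeBot] {u : ι → α} {r : ι → γ}
    (hf : LowerSemicontinuousAt f a) (hu : Tendsto u l (𝓝 a)) (hr : Tendsto r l (𝓝 c))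
    (hle : ∀ᶠ i in l, f (u i) ≤ r i) : f a ≤ c := by
  refine le_of_forall_lt_imp_le_of_dense fun y hy ↦ ge_of_tendsto hr ?_
  filter_upwards [hu.eventually (hf y hy), hle] with i hyi hi using hyi.le.trans hi

theorem tendsto_of_isInducing_of_tendsto_sub {ι α E : Type*} [TopologicalSpace α] [AddCommGroup E]
    [TopologicalSpace E] [ContinuousAdd E] {e : α → E} (he : IsInducing e)
    {l : Filter ι} {u v : ι → α} {a : α} (hv : Tendsto v l (𝓝 a))
    (huv : Tendsto (fun i ↦ e (u i) - e (v i)) l (𝓝 0)) : Tendsto u l (𝓝 a) := by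
  rw [he.tendsto_nhds_iff] at hv ⊢
  simpa [Function.comp_def] using huv.add hv

section MidpointConvex

/-- Joint midpoint convexity of a cost function `T`, for a midpoint operation `mid` on its domain.
The average is written as a half of the sum, so that it applies directly to inf-convolutions. -/
def MidpointConvex {Y : Type*} (mid : Y → Y → Y) (T : Y → Y → EReal) : Prop :=
  ∀ x₁ y₁ x₂ y₂, T (mid x₁ x₂) (mid y₁ y₂) ≤ (T x₁ y₁ + T x₂ y₂) / 2

variable {Y E : Type*} [AddCommGroup E] [Module ℝ E] {e : Y → E} {mid : Y → Y → Y}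
  {T : Y → Y → EReal}

theorem exists_lt_half_and_sub_eq_half
    (hmid : ∀ x y, e (mid x y) = midpoint ℝ (e x) (e y)) (hconv : MidpointConvex mid T)
    (hT : infConv T T ≤ T) {x z : Y} {c : ℝ} (h : T x z < c) :
    ∃ x' z', T x' z' < ((1 / 2 * c : ℝ) : EReal) ∧ e x' - e z' = (1 / 2 : ℝ) • (e x - e z) := by
  obtain ⟨y, hy⟩ := infConv_lt_iff.1 ((hT x z).trans_lt h)
  refine ⟨mid x y, mid y z, ?_, ?_⟩
  · calc
      T (mid x y) (mid y z) ≤ (T x y + T y z) / 2 := hconv x y y z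
      _ < (c : EReal) / 2 :=
        EReal.div_lt_div_right_of_pos zero_lt_two (EReal.coe_ne_top 2) hy
      _ = ((1 / 2 * c : ℝ) : EReal) := by rw [EReal.coe_mul, ereal_half_mul]
  · rw [hmid, hmid, midpoint_comm (e y) (e z), ← vsub_eq_sub,
      midpoint_vsub_midpoint_same_right, invOf_eq_inv, ← one_div, vsub_eq_sub]

theorem exists_lt_half_pow_and_sub_eq_half_pow
    (hmid : ∀ x y, e (mid x y) = midpoint ℝ (e x) (e y)) (hconv : MidpointConvex mid T)
    (hT : infConv T T ≤ T) {x z : Y} {c : ℝ} (h : T x z < c) (n : ℕ) :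
    ∃ x' z', T x' z' < (((1 / 2) ^ n * c : ℝ) : EReal) ∧
      e x' - e z' = ((1 / 2) ^ n : ℝ) • (e x - e z) := by
  induction n with
  | zero => exact ⟨x, z, by simpa using h, by simp⟩
  | succ n ih =>
    obtain ⟨x₁, z₁, hlt, hsub⟩ := ih
    obtain ⟨x₂, z₂, hlt', hsub'⟩ := exists_lt_half_and_sub_eq_half hmid hconv hT hlt
    exact ⟨x₂, z₂, by rwa [pow_succ', mul_assoc], by rw [hsub', hsub, smul_smul, pow_succ']⟩

variable [TopologicalSpace Y] [CompactSpace Y] [TopologicalSpace E] [ContinuousAdd E]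
  [ContinuousSMul ℝ E]

theorem exists_diag_nonpos_of_infConv_le (he : IsInducing e)
    (hmid : ∀ x y, e (mid x y) = midpoint ℝ (e x) (e y))
    (hconv : MidpointConvex mid T) (hproper : ∃ x y, T x y ≠ ⊤)
    (hlsc : ∀ x, LowerSemicontinuousAt (fun p : Y × Y ↦ T p.1 p.2) (x, x))
    (hT : infConv T T ≤ T) : ∃ x, T x x ≤ 0 := by
  obtain ⟨x₀, z₀, hne⟩ := hproper
  obtain ⟨c, hc, -⟩ := EReal.lt_iff_exists_real_btwn.1 (lt_top_iff_ne_top.2 hne)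
  choose x z hlt hsub using exists_lt_half_pow_and_sub_eq_half_pow hmid hconv hT hc
  obtain ⟨b, -, hz⟩ := isCompact_univ.ultrafilter_le_nhds ((hyperfilter ℕ).map z) (by simp)
  have hpow : Tendsto (fun n : ℕ ↦ ((1 / 2) ^ n : ℝ)) (hyperfilter ℕ) (𝓝 0) :=
    (tendsto_pow_atTop_nhds_zero_of_lt_one (by norm_num) (by norm_num)).mono_left
      Nat.hyperfilter_le_atTop
  have hdiff : Tendsto (fun n ↦ e (x n) - e (z n)) (hyperfilter ℕ) (𝓝 0) := by
    simpa only [hsub, zero_smul] using hpow.smul_const (e x₀ - e z₀)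
  have hcost : Tendsto (fun n : ℕ ↦ (((1 / 2) ^ n * c : ℝ) : EReal)) (hyperfilter ℕ) (𝓝 0) := by
    simpa only [zero_mul, EReal.coe_zero] using EReal.tendsto_coe.2 (hpow.mul_const c)
  exact ⟨b, le_of_lowerSemicontinuousAt_of_tendsto (f := fun p : Y × Y ↦ T p.1 p.2) (hlsc b)
    ((tendsto_of_isInducing_of_tendsto_sub he hz hdiff).prodMk_nhds hz) hcost
    (.of_forall fun n ↦ (hlt n).le)⟩

/-- `Y` plays the role of a compact convex set in `E`, with `e` the inclusion. -/
theorem stmt12_general (he : IsInducing e)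
    (hmid : ∀ x y, e (mid x y) = midpoint ℝ (e x) (e y))
    (hconv : MidpointConvex mid T) (hproper : ∃ x y, T x y ≠ ⊤)
    (hbot : ∀ x, T x x ≠ ⊥)
    (hlsc : ∀ x, LowerSemicontinuousAt (fun p : Y × Y ↦ T p.1 p.2) (x, x))
    (hid : T = infConv T T) :
    (⨅ x, T x x) = 0 ∧ ∃ x, T x x = 0 := by
  have hnonneg (x : Y) : 0 ≤ T x x := diag_nonneg_of_le_infConv (hbot x) (hid.le x x)
  obtain ⟨x, hx⟩ := exists_diag_nonpos_of_infConv_le he hmid hconv hproper hlsc hid.ge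
  exact ⟨le_antisymm ((iInf_le _ x).trans hx) (le_iInf hnonneg), x, le_antisymm hx (hnonneg x)⟩

end MidpointConvex

section ProbabilityMeasure

variable {X : Type*} [MeasurableSpace X]

/-- The midpoint `(μ + ν) / 2` of two probability measures. The weights are those of the convex
combination with `t = 1 / 2` in the convexity hypothesis on a transfer. -/
noncomputable def probMidpoint (μ ν : ProbabilityMeasure X) : ProbabilityMeasure X :=
  ⟨ENNReal.ofReal (1 / 2) • (μ : Measure X) + ENNReal.ofReal (1 - 1 / 2) • (ν : Measure X), ⟨by
    simp only [Measure.add_apply, Measure.smul_apply, measure_univ, smul_eq_mul, mul_one]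
    rw [← ENNReal.ofReal_add (by norm_num) (by norm_num)]
    norm_num⟩⟩

theorem integral_probMidpoint {F : Type*} [NormedAddCommGroup F] [NormedSpace ℝ F]
    {μ ν : ProbabilityMeasure X} {f : X → F} (hμ : Integrable f μ) (hν : Integrable f ν) :
    ∫ x, f x ∂(probMidpoint μ ν : Measure X) = midpoint ℝ (∫ x, f x ∂μ) (∫ x, f x ∂ν) := by
  rw [probMidpoint, ProbabilityMeasure.coe_mk,
    integral_add_measure (hμ.smul_measure ENNReal.ofReal_ne_top)
      (hν.smul_measure ENNReal.ofReal_ne_top),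
    integral_smul_measure, integral_smul_measure, midpoint_eq_smul_add, smul_add]
  norm_num

variable [TopologicalSpace X] [OpensMeasurableSpace X]

/-- A probability measure as the functional `f ↦ ∫ f dμ` on bounded continuous functions; this
realises `P(X)`, with its weak* topology, inside a real topological vector space. -/
noncomputable def integralFunctional (μ : ProbabilityMeasure X) : (X →ᵇ ℝ) → ℝ :=
  fun f ↦ ∫ x, f x ∂(μ : Measure X)

theorem isInducing_integralFunctional :
    IsInducing (integralFunctional : ProbabilityMeasure X → (X →ᵇ ℝ) → ℝ) := by
  refine isInducing_iff_nhds.2 fun μ ↦ eq_of_forall_le_iff fun F ↦ ?_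
  rw [← map_le_iff_le_comap]
  exact ProbabilityMeasure.tendsto_iff_forall_integral_tendsto.trans tendsto_pi_nhds.symm

theorem integralFunctional_probMidpoint (μ ν : ProbabilityMeasure X) :
    integralFunctional (probMidpoint μ ν) =
      midpoint ℝ (integralFunctional μ) (integralFunctional ν) := by
  ext f
  rw [pi_midpoint_apply]
  exact integral_probMidpoint (f.integrable _) (f.integrable _)

end ProbabilityMeasure

/-- Let `𝒯` be an idempotent backward linear transfer on `P(X) × P(X)`,
i.e. `𝒯 = 𝒯 ⋆ 𝒯` for the inf-convolution. Then its Mather constant is zero: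
`inf_μ 𝒯(μ, μ) = 0`, and the set `𝒩 = {μ : 𝒯(μ, μ) = 0}` is non-empty. -/
theorem stmt12 {X : Type*} [MetricSpace X] [CompactSpace X] [MeasurableSpace X] [BorelSpace X]
    (𝒯 : ProbabilityMeasure X → ProbabilityMeasure X → EReal)
    (hproper : ∃ μ ν, 𝒯 μ ν ≠ ⊤)
    (hbdd : ∃ m : ℝ, ∀ μ ν, (m : EReal) ≤ 𝒯 μ ν)
    (hlsc : LowerSemicontinuous
      (fun p : ProbabilityMeasure X × ProbabilityMeasure X => 𝒯 p.1 p.2))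
    (hconv : ∀ (μ₁ ν₁ μ₂ ν₂ μ ν : ProbabilityMeasure X) (t : ℝ), 0 ≤ t → t ≤ 1 →
      (μ : Measure X) =
        ENNReal.ofReal t • (μ₁ : Measure X) + ENNReal.ofReal (1 - t) • (μ₂ : Measure X) →
      (ν : Measure X) =
        ENNReal.ofReal t • (ν₁ : Measure X) + ENNReal.ofReal (1 - t) • (ν₂ : Measure X) →
      𝒯 μ ν ≤ (t : EReal) * 𝒯 μ₁ ν₁ + ((1 - t : ℝ) : EReal) * 𝒯 μ₂ ν₂)
    (hid : ∀ μ ν : ProbabilityMeasure X,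
      𝒯 μ ν = ⨅ σ : ProbabilityMeasure X, (𝒯 μ σ + 𝒯 σ ν)) :
    (⨅ μ : ProbabilityMeasure X, 𝒯 μ μ) = 0 ∧
    ∃ μ : ProbabilityMeasure X, 𝒯 μ μ = 0 := by
  obtain ⟨m, hm⟩ := hbdd
  have hbot (μ : ProbabilityMeasure X) : 𝒯 μ μ ≠ ⊥ :=
    ((EReal.bot_lt_coe m).trans_le (hm μ μ)).ne'
  have hmidconv : MidpointConvex probMidpoint 𝒯 := fun μ₁ ν₁ μ₂ ν₂ ↦
    (hconv μ₁ ν₁ μ₂ ν₂ _ _ (1 / 2) (by norm_num) (by norm_num) rfl rfl).trans_eq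
      (ereal_half_mul_add_half_mul _ _)
  exact stmt12_general isInducing_integralFunctional integralFunctional_probMidpoint hmidconv
    hproper hbot (fun μ ↦ hlsc (μ, μ)) (funext₂ hid)
end

section
/- Let 𝒯 be an idempotent backward linear transfer on P(X) × P(X) and 𝒩 = {μ : 𝒯(μ, μ) = 0}. Then 𝒯 is Null-factorizable: for all μ, ν ∈ P(X), 𝒯(μ, ν) = inf{𝒯(μ, σ) + 𝒯(σ, ν) : σ ∈ 𝒩}. -/
open MeasureTheory
open scoped ENNReal

/-!
Fix `ν` and read `𝒯 μ σ + 𝒯 σ ν ≤ 𝒯 μ ν` as: `σ` lies between `μ` and `ν`. By the triangle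
inequality this is a transitive relation in `(μ, σ)`, and by compactness and lower semicontinuity
the points it relates to `μ` form a nonempty closed set. As in the Ellis–Numakura lemma, Zorn's
lemma then yields, between `μ` and `ν`, a point `σ` lying between itself and `ν`, that is
`𝒯 σ σ + 𝒯 σ ν ≤ 𝒯 σ ν`. Cancelling the finite value `𝒯 σ ν` gives `𝒯 σ σ ≤ 0`, while
`𝒯 σ σ ≤ 𝒯 σ σ + 𝒯 σ σ` gives `0 ≤ 𝒯 σ σ`.
-/

section ClosedTransitiveRelation

variable {P : Type*} [TopologicalSpace P] [CompactSpace P] {r : P → P → Prop} [IsTrans P r]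

theorem exists_forall_rel_of_isChain (hclosed : ∀ a, IsClosed {b | r a b})
    (hserial : ∀ a, ∃ b, r a b) {s : Set P} (hs : IsChain r s) (hne : s.Nonempty) :
    ∃ b, ∀ a ∈ s, r a b := by
  have : Nonempty s := hne.to_subtype
  have hdir : Directed (· ⊇ ·) fun a : s => {b | r a b} := fun a b => by
    obtain rfl | hab := eq_or_ne a b
    · exact ⟨a, subset_rfl, subset_rfl⟩
    rcases hs a.2 b.2 (Subtype.coe_ne_coe.2 hab) with h | h
    · exact ⟨b, fun _ => trans_of r h, subset_rfl⟩
    · exact ⟨a, subset_rfl, fun _ => trans_of r h⟩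
  obtain ⟨b, hb⟩ := IsCompact.nonempty_iInter_of_directed_nonempty_isCompact_isClosed _ hdir
    (fun a => hserial a) (fun a => (hclosed a).isCompact) (fun a => hclosed a)
  exact ⟨b, fun a ha => Set.mem_iInter.1 hb ⟨a, ha⟩⟩

theorem exists_rel_and_rel_self (hclosed : ∀ a, IsClosed {b | r a b})
    (hserial : ∀ a, ∃ b, r a b) (a : P) : ∃ b, r a b ∧ r b b := by
  have hbdd : ∀ s : Set {b // r a b}, IsChain (fun x y : {b // r a b} => r x y) s →
      ∃ u : {b // r a b}, ∀ x ∈ s, r x u := fun s hs => by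
    have hchain : IsChain r (insert a (Subtype.val '' s)) :=
      (hs.image_of_map_rel _ r Subtype.val fun _ _ => id).insert
        (Set.forall_mem_image.2 fun x _ _ => Or.inl x.2)
    obtain ⟨u, hu⟩ := exists_forall_rel_of_isChain hclosed hserial hchain (Set.insert_nonempty _ _)
    exact ⟨⟨u, hu a (Set.mem_insert _ _)⟩,
      fun x hx => hu x (Set.mem_insert_of_mem _ (Set.mem_image_of_mem _ hx))⟩
  obtain ⟨⟨m, ham⟩, hmax⟩ := exists_maximal_of_chains_bounded hbdd (trans_of r)
  obtain ⟨b, hmb⟩ := hserial m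
  exact ⟨m, ham, trans_of r hmb (hmax ⟨b, trans_of r ham hmb⟩ hmb)⟩

end ClosedTransitiveRelation

/-- Metric betweenness for a cost `T`: passing through `b` on the way from `a` to `c` costs nothing
extra. Under the triangle inequality the inequality is an equality. -/
def IsBetween {P α : Type*} [Add α] [LE α] (T : P → P → α) (a b c : P) : Prop :=
  T a b + T b c ≤ T a c

theorem IsBetween.trans {P α : Type*} [AddSemigroup α] [Preorder α] [AddLeftMono α]
    [AddRightMono α] {T : P → P → α} {a b c d : P} (htri : T a c ≤ T a b + T b c)
    (hb : IsBetween T a b d) (hc : IsBetween T b c d) : IsBetween T a c d :=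
  calc T a c + T c d
      ≤ T a b + T b c + T c d := by gcongr
    _ = T a b + (T b c + T c d) := add_assoc _ _ _
    _ ≤ T a b + T b d := by gcongr; exact hc
    _ ≤ T a d := hb

theorem eq_zero_of_le_add_self_of_add_le {x y : EReal} (hx : x ≠ ⊥) (hy : y ≠ ⊥) (hy' : y ≠ ⊤)
    (hxx : x ≤ x + x) (hxy : x + y ≤ y) : x = 0 := by
  lift y to ℝ using ⟨hy', hy⟩
  have hx0 : x ≤ 0 := (EReal.addLECancellable_coe y).add_le_iff_nonpos_left.1 hxy
  lift x to ℝ using ⟨ne_top_of_le_ne_top EReal.zero_ne_top hx0, hx⟩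
  exact le_antisymm hx0 ((EReal.addLECancellable_coe x).le_add_iff_nonneg_left.1 hxx)

section LowerSemicontinuousTransfer

variable {P : Type*} [TopologicalSpace P] {T : P → P → EReal}

theorem lowerSemicontinuous_add_through (hbot : ∀ a b, T a b ≠ ⊥)
    (hleft : ∀ a, LowerSemicontinuous fun b => T a b)
    (hright : ∀ b, LowerSemicontinuous fun a => T a b) (a c : P) :
    LowerSemicontinuous fun b => T a b + T b c :=
  (hleft a).add' (hright c) fun _ =>
    EReal.continuousAt_add (Or.inr (hbot _ _)) (Or.inl (hbot _ _))

theorem exists_isBetween [CompactSpace P] {a c : P}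
    (hlsc : LowerSemicontinuous fun b => T a b + T b c)
    (hid : T a c = ⨅ b, (T a b + T b c)) : ∃ b, IsBetween T a b c := by
  obtain ⟨b, -, hmin⟩ := (hlsc.lowerSemicontinuousOn _).exists_isMinOn ⟨a, Set.mem_univ a⟩
    isCompact_univ
  exact ⟨b, (le_iInf fun d => hmin (Set.mem_univ d)).trans_eq hid.symm⟩

theorem exists_isBetween_and_apply_self_eq_zero [CompactSpace P] (hbot : ∀ a b, T a b ≠ ⊥)
    (hleft : ∀ a, LowerSemicontinuous fun b => T a b)
    (hright : ∀ b, LowerSemicontinuous fun a => T a b)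
    (hid : ∀ a c, T a c = ⨅ b, (T a b + T b c)) {a c : P} (hac : T a c ≠ ⊤) :
    ∃ b, IsBetween T a b c ∧ T b b = 0 := by
  have htri (a b c) : T a c ≤ T a b + T b c := (hid a c).trans_le (iInf_le _ b)
  have hlsc := lowerSemicontinuous_add_through hbot hleft hright
  have : IsTrans P fun a b => IsBetween T a b c :=
    ⟨fun _ _ _ hab hbd => hab.trans (htri _ _ _) hbd⟩
  obtain ⟨b, hab, hbb⟩ := exists_rel_and_rel_self (r := fun a b => IsBetween T a b c)
    (fun x => (hlsc x c).isClosed_preimage (T x c))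
    (fun x => exists_isBetween (hlsc x c) (hid x c)) a
  have hbc : T b c ≠ ⊤ := fun h => hac <| top_le_iff.1 <| by
    simpa only [IsBetween, h, EReal.add_top_of_ne_bot (hbot a b)] using hab
  exact ⟨b, hab, eq_zero_of_le_add_self_of_add_le (hbot b b) (hbot b c) hbc (htri b b b) hbb⟩

theorem stmt13_general [CompactSpace P] (hbot : ∀ a b, T a b ≠ ⊥)
    (hleft : ∀ a, LowerSemicontinuous fun b => T a b)
    (hright : ∀ b, LowerSemicontinuous fun a => T a b)
    (hid : ∀ a c, T a c = ⨅ b, (T a b + T b c)) (a c : P) :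
    T a c = ⨅ b ∈ {b | T b b = 0}, (T a b + T b c) := by
  refine le_antisymm (le_iInf₂ fun b _ => (hid a c).trans_le (iInf_le _ b)) ?_
  obtain hac | hac := eq_or_ne (T a c) ⊤
  · exact le_top.trans_eq hac.symm
  · obtain ⟨b, hbetween, hb⟩ :=
      exists_isBetween_and_apply_self_eq_zero hbot hleft hright hid hac
    exact (iInf₂_le b hb).trans hbetween

end LowerSemicontinuousTransfer

/-- Let `𝒯` be an idempotent backward linear transfer on `P(X) × P(X)`
(`𝒯 = 𝒯 ⋆ 𝒯`) and `𝒩 = {σ : 𝒯(σ, σ) = 0}`. Then `𝒯` is Null-factorizable: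
`𝒯(μ, ν) = inf { 𝒯(μ, σ) + 𝒯(σ, ν) : σ ∈ 𝒩 }` for all `μ, ν ∈ P(X)`. -/
theorem stmt13 {X : Type*} [MetricSpace X] [CompactSpace X] [MeasurableSpace X] [BorelSpace X]
    (𝒯 : ProbabilityMeasure X → ProbabilityMeasure X → EReal)
    (hproper : ∃ μ ν, 𝒯 μ ν ≠ ⊤)
    (hbdd : ∃ m : ℝ, ∀ μ ν, (m : EReal) ≤ 𝒯 μ ν)
    (hlsc : LowerSemicontinuous
      (fun p : ProbabilityMeasure X × ProbabilityMeasure X => 𝒯 p.1 p.2))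
    (hconv : ∀ (μ₁ ν₁ μ₂ ν₂ μ ν : ProbabilityMeasure X) (t : ℝ), 0 ≤ t → t ≤ 1 →
      (μ : Measure X) =
        ENNReal.ofReal t • (μ₁ : Measure X) + ENNReal.ofReal (1 - t) • (μ₂ : Measure X) →
      (ν : Measure X) =
        ENNReal.ofReal t • (ν₁ : Measure X) + ENNReal.ofReal (1 - t) • (ν₂ : Measure X) →
      𝒯 μ ν ≤ (t : EReal) * 𝒯 μ₁ ν₁ + ((1 - t : ℝ) : EReal) * 𝒯 μ₂ ν₂)
    (hid : ∀ μ ν : ProbabilityMeasure X,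
      𝒯 μ ν = ⨅ σ : ProbabilityMeasure X, (𝒯 μ σ + 𝒯 σ ν)) :
    ∀ μ ν : ProbabilityMeasure X,
      𝒯 μ ν = ⨅ σ ∈ {σ : ProbabilityMeasure X | 𝒯 σ σ = 0}, (𝒯 μ σ + 𝒯 σ ν) := by
  obtain ⟨m, hm⟩ := hbdd
  exact stmt13_general (fun μ ν => ne_bot_of_le_ne_bot (EReal.coe_ne_bot m) (hm μ ν))
    (fun μ => hlsc.comp (Continuous.prodMk_right μ))
    (fun ν => hlsc.comp (Continuous.prodMk_left ν)) hid
end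

section
/- Let X be a compact metric space, σ : X → X continuous and surjective, and A : X → ℝ lower semi-continuous bounded below. Consider the transfer 𝒯(μ, ν) = ∫ A dμ if ν = σ_# μ (and +∞ otherwise), with Kantorovich operator Tg(x) = g(σ(x)) − A(x). Then the Mather constant satisfies c(𝒯) = inf{∫_X A dμ : μ ∈ P(X), σ_# μ = μ} = sup_{f ∈ C(X)} inf_{x ∈ X} {f(x) − f(σ(x)) + A(x)}. -/
open MeasureTheory
open scoped ENNReal Classical

/-!
A continuous `h ≤ A` has integral at most `∫ A dμ`, and since a lower semicontinuous function on a
metric space is the pointwise limit of its Lipschitz minorants, these integrals determine `∫ A dμ`.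
If `r ≤ f - f ∘ σ + A`, then `r - (f - f ∘ σ)` is such a minorant, and its integral against a
`σ`-invariant `μ` is `r`; this is weak duality.

Conversely, suppose every `f - f ∘ σ + A` takes a value at most `t`. Then the convex set of all
`f - f ∘ σ + h` with `h ≤ A` continuous misses the open convex set of functions everywhere `> t`.
A separating functional is, up to sign and normalization, a probability measure `μ` with
`∫ (f - f ∘ σ) dμ + ∫ h dμ ≤ t`. As `f` ranges over a vector space, the first term vanishes, so `μ`
is invariant, and what remains gives `∫ A dμ ≤ t`.
-/

open Filter
open scoped NNReal Topology Pointwise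

section PaschHausdorff

variable {X : Type*} [PseudoMetricSpace X] {A : X → ℝ}

/-- The Pasch–Hausdorff envelope of `A`: its largest `K`-Lipschitz minorant when `A` is bounded
below. It approximates a lower semicontinuous function by continuous ones as `K → ∞`. -/
noncomputable def paschHausdorff (A : X → ℝ) (K : ℝ≥0) (x : X) : ℝ :=
  ⨅ y, A y + K * dist x y

lemma le_paschHausdorff {b : ℝ} (hb : ∀ y, b ≤ A y) (K : ℝ≥0) (x : X) :
    b ≤ paschHausdorff A K x :=
  have : Nonempty X := ⟨x⟩
  le_ciInf fun y => (hb y).trans (le_add_of_nonneg_right (by positivity))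

lemma paschHausdorff_le_add (hA : BddBelow (Set.range A)) (K : ℝ≥0) (x y : X) :
    paschHausdorff A K x ≤ A y + K * dist x y := by
  obtain ⟨b, hb⟩ := hA
  refine ciInf_le ⟨b, ?_⟩ y
  rintro _ ⟨z, rfl⟩
  exact (hb ⟨z, rfl⟩).trans (le_add_of_nonneg_right (by positivity))

lemma paschHausdorff_le (hA : BddBelow (Set.range A)) (K : ℝ≥0) (x : X) :
    paschHausdorff A K x ≤ A x := by
  simpa using paschHausdorff_le_add hA K x x

lemma lipschitzWith_paschHausdorff (hA : BddBelow (Set.range A)) (K : ℝ≥0) :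
    LipschitzWith K (paschHausdorff A K) := by
  refine LipschitzWith.of_le_add_mul K fun x y => ?_
  have : Nonempty X := ⟨x⟩
  rw [← sub_le_iff_le_add]
  refine le_ciInf fun z => sub_le_iff_le_add.2 ?_
  calc paschHausdorff A K x ≤ A z + K * dist x z := paschHausdorff_le_add hA K x z
    _ ≤ A z + K * (dist x y + dist y z) := by gcongr; exact dist_triangle x y z
    _ = A z + K * dist y z + K * dist x y := by ring

lemma tendsto_paschHausdorff (hA : BddBelow (Set.range A)) {x : X}
    (hx : LowerSemicontinuousAt A x) :
    Tendsto (fun K => paschHausdorff A K x) atTop (𝓝 (A x)) := by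
  refine tendsto_order.2 ⟨fun a ha => ?_, fun a ha =>
    .of_forall fun K => (paschHausdorff_le hA K x).trans_lt ha⟩
  have : Nonempty X := ⟨x⟩
  obtain ⟨a', haa', ha'⟩ := exists_between ha
  obtain ⟨δ, hδ, hnear⟩ := Metric.eventually_nhds_iff.1 (hx a' ha')
  obtain ⟨b, hb⟩ := hA
  have hlarge : ∀ᶠ K : ℝ≥0 in atTop, (a' - b) / δ ≤ K :=
    NNReal.tendsto_coe_atTop.2 tendsto_id |>.eventually_ge_atTop _
  filter_upwards [hlarge] with K hK
  refine haa'.trans_le (le_ciInf fun y => ?_)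
  rcases lt_or_ge (dist y x) δ with hy | hy
  · exact (hnear hy).le.trans (le_add_of_nonneg_right (by positivity))
  · calc a' ≤ b + K * δ := by linarith [(div_le_iff₀ hδ).1 hK]
      _ ≤ A y + K * dist x y := by
        rw [dist_comm x y]
        gcongr
        exact hb ⟨y, rfl⟩

end PaschHausdorff

section ShiftedIntegral

variable {X : Type*} [MeasurableSpace X]

/-- The integral, possibly `+∞`, of a function `A ≥ b` against a probability measure, computed
from the Lebesgue integral of `A - b`, which is well defined in `ℝ≥0∞`. -/
noncomputable def shiftedIntegral (b : ℝ) (A : X → ℝ) (μ : Measure X) : EReal :=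
  (b : EReal) + ((∫⁻ x, ENNReal.ofReal (A x - b) ∂μ : ℝ≥0∞) : EReal)

lemma ofReal_integral_le_lintegral_ofReal {μ : Measure X} {g : X → ℝ} (hg : Integrable g μ) :
    ENNReal.ofReal (∫ x, g x ∂μ) ≤ ∫⁻ x, ENNReal.ofReal (g x) ∂μ := by
  rw [integral_eq_lintegral_pos_part_sub_lintegral_neg_part hg]
  exact (ENNReal.ofReal_le_ofReal (sub_le_self _ ENNReal.toReal_nonneg)).trans
    ENNReal.ofReal_toReal_le

lemma integral_le_shiftedIntegral {μ : Measure X} [IsProbabilityMeasure μ] {h A : X → ℝ}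
    (hh : Integrable h μ) (hle : ∀ x, h x ≤ A x) (b : ℝ) :
    ((∫ x, h x ∂μ : ℝ) : EReal) ≤ shiftedIntegral b A μ := by
  have hsub : ∫ x, (h x - b) ∂μ = ∫ x, h x ∂μ - b := by
    simp [integral_sub hh (integrable_const b)]
  have hlint : ENNReal.ofReal (∫ x, h x ∂μ - b) ≤ ∫⁻ x, ENNReal.ofReal (A x - b) ∂μ := by
    rw [← hsub]
    exact (ofReal_integral_le_lintegral_ofReal (hh.sub (integrable_const b))).trans
      (lintegral_mono fun x => ENNReal.ofReal_le_ofReal (sub_le_sub_right (hle x) b))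
  calc ((∫ x, h x ∂μ : ℝ) : EReal) = b + ((∫ x, h x ∂μ - b : ℝ) : EReal) := by
        rw [← EReal.coe_add, add_sub_cancel]
    _ ≤ b + ((ENNReal.ofReal (∫ x, h x ∂μ - b) : ℝ≥0∞) : EReal) := by
        gcongr
        rw [EReal.coe_ennreal_ofReal]
        exact_mod_cast le_max_left _ _
    _ ≤ shiftedIntegral b A μ := by
        unfold shiftedIntegral
        gcongr
        exact_mod_cast hlint

lemma integrable_continuousMap [TopologicalSpace X] [CompactSpace X] [OpensMeasurableSpace X]
    (f : C(X, ℝ)) (μ : Measure X) [IsFiniteMeasure μ] : Integrable f μ :=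
  f.continuous.integrable_of_hasCompactSupport (.of_compactSpace f)

lemma lintegral_ofReal_sub_le_of_forall_continuousMap_integral_le [PseudoMetricSpace X]
    [CompactSpace X] [OpensMeasurableSpace X] {μ : Measure X} [IsProbabilityMeasure μ]
    {A : X → ℝ} (hA : LowerSemicontinuous A) {b t : ℝ} (hb : ∀ x, b ≤ A x)
    (ht : ∀ h : C(X, ℝ), (∀ x, h x ≤ A x) → ∫ x, h x ∂μ ≤ t) :
    ∫⁻ x, ENNReal.ofReal (A x - b) ∂μ ≤ ENNReal.ofReal (t - b) := by
  have hbdd : BddBelow (Set.range A) := ⟨b, Set.forall_mem_range.2 hb⟩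
  let h (K : ℝ≥0) : C(X, ℝ) :=
    ⟨paschHausdorff A K, (lipschitzWith_paschHausdorff hbdd K).continuous⟩
  have hbound (K : ℝ≥0) : ∫⁻ x, ENNReal.ofReal (h K x - b) ∂μ ≤ ENNReal.ofReal (t - b) := by
    have hint : Integrable (fun x => h K x - b) μ :=
      (integrable_continuousMap (h K) μ).sub (integrable_const b)
    rw [← ofReal_integral_eq_lintegral_ofReal hint
      (.of_forall fun x => sub_nonneg.2 (le_paschHausdorff hb K x)),
      integral_sub (integrable_continuousMap (h K) μ) (integrable_const b)]
    simpa using ENNReal.ofReal_le_ofReal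
      (sub_le_sub_right (ht (h K) (paschHausdorff_le hbdd K)) b)
  have hlim (x : X) : Tendsto (fun K => ENNReal.ofReal (h K x - b)) atTop
      (𝓝 (ENNReal.ofReal (A x - b))) :=
    ENNReal.tendsto_ofReal ((tendsto_paschHausdorff hbdd (hA x)).sub_const b)
  calc ∫⁻ x, ENNReal.ofReal (A x - b) ∂μ
      = ∫⁻ x, liminf (fun K => ENNReal.ofReal (h K x - b)) atTop ∂μ :=
        lintegral_congr fun x => (hlim x).liminf_eq.symm
    _ ≤ liminf (fun K => ∫⁻ x, ENNReal.ofReal (h K x - b) ∂μ) atTop :=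
        lintegral_liminf_le fun K => by fun_prop
    _ ≤ ENNReal.ofReal (t - b) :=
        liminf_le_of_frequently_le' (Frequently.of_forall hbound)

lemma shiftedIntegral_le_of_forall_continuousMap_integral_le [PseudoMetricSpace X]
    [CompactSpace X] [OpensMeasurableSpace X] {μ : Measure X} [IsProbabilityMeasure μ]
    {A : X → ℝ} (hA : LowerSemicontinuous A) {b t : ℝ} (hb : ∀ x, b ≤ A x)
    (ht : ∀ h : C(X, ℝ), (∀ x, h x ≤ A x) → ∫ x, h x ∂μ ≤ t) :
    shiftedIntegral b A μ ≤ t := by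
  have hbt : b ≤ t := by simpa using ht (.const X b) hb
  calc shiftedIntegral b A μ ≤ b + ((ENNReal.ofReal (t - b) : ℝ≥0∞) : EReal) := by
        unfold shiftedIntegral
        gcongr
        exact_mod_cast lintegral_ofReal_sub_le_of_forall_continuousMap_integral_le hA hb ht
    _ = t := by
        rw [EReal.coe_ennreal_ofReal, max_eq_left (sub_nonneg.2 hbt), ← EReal.coe_add,
          add_sub_cancel]

end ShiftedIntegral

section Minimax

lemma nonpos_of_forall_mul_add_le {𝕜 : Type*} [Field 𝕜] [LinearOrder 𝕜] [IsStrictOrderedRing 𝕜]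
    {a c u : 𝕜} (h : ∀ s, 0 ≤ s → s * c + a ≤ u) : c ≤ 0 := by
  by_contra! hc
  have hu := h ((|u - a| + 1) / c) (by positivity)
  rw [div_mul_cancel₀ _ hc.ne'] at hu
  linarith [le_abs_self (u - a)]

variable {X : Type*} [TopologicalSpace X]

lemma convex_setOfPred_forall_mem {s : X → Set ℝ} (hs : ∀ x, Convex ℝ (s x)) :
    Convex ℝ {g : C(X, ℝ) | ∀ x, g x ∈ s x} :=
  fun _ hg _ hk _ _ hp hq hpq x => hs x (hg x) (hk x) hp hq hpq

variable [CompactSpace X]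

lemma isOpen_setOfPred_forall_lt (t : ℝ) : IsOpen {g : C(X, ℝ) | ∀ x, t < g x} := by
  simpa [Set.MapsTo] using
    ContinuousMap.isOpen_setOfPred_mapsTo (X := X) isCompact_univ (isOpen_Ioi (a := t))

lemma exists_linearMap_nonpos_forall_mul_le {K : Set C(X, ℝ)} (hK : Convex ℝ K)
    (hne : K.Nonempty) {t : ℝ} (ht : ∀ g ∈ K, ∃ x, g x ≤ t) :
    ∃ L : C(X, ℝ) →ₗ[ℝ] ℝ, (∀ g, 0 ≤ g → L g ≤ 0) ∧ L 1 < 0 ∧ ∀ g ∈ K, t * L 1 ≤ L g := by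
  have hdisj : Disjoint {g : C(X, ℝ) | ∀ x, t < g x} K :=
    Set.disjoint_left.2 fun g hg hgK => let ⟨x, hx⟩ := ht g hgK; (hg x).not_ge hx
  obtain ⟨L, u, hU, hKu⟩ := geometric_hahn_banach_open
    (convex_setOfPred_forall_mem fun _ => convex_Ioi t) (isOpen_setOfPred_forall_lt t) hK hdisj
  have hlt (s ε : ℝ) (g : C(X, ℝ)) (hs : 0 ≤ s) (hε : 0 < ε) (hg : 0 ≤ g) :
      s * L g + (t + ε) * L 1 < u := by
    have hmem (x : X) : t < (s • g + (t + ε) • (1 : C(X, ℝ))) x := by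
      have hsg : 0 ≤ s * g x := mul_nonneg hs (hg x)
      simp only [ContinuousMap.add_apply, ContinuousMap.smul_apply, ContinuousMap.one_apply,
        smul_eq_mul]
      linarith
    simpa only [map_add, map_smul, smul_eq_mul] using hU _ hmem
  have hnonpos (g : C(X, ℝ)) (hg : 0 ≤ g) : L g ≤ 0 :=
    nonpos_of_forall_mul_add_le fun s hs => (hlt s 1 g hs one_pos hg).le
  have hone : L 1 < 0 := by
    refine (hnonpos 1 zero_le_one).lt_of_ne fun h0 => ?_
    obtain ⟨k, hk⟩ := hne
    have hkpos : 0 ≤ k + ‖k‖ • (1 : C(X, ℝ)) := fun x => by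
      simpa [← neg_le_iff_add_nonneg] using ContinuousMap.neg_norm_le_apply k x
    have hLk : L k ≤ 0 := by simpa [h0] using hnonpos _ hkpos
    have hu : 0 < u := by simpa [h0] using hlt 0 1 0 le_rfl one_pos le_rfl
    exact (hu.trans_le (hKu k hk)).not_ge hLk
  refine ⟨L, hnonpos, hone, fun g hg => le_trans ?_ (hKu g hg)⟩
  refine le_of_forall_pos_lt_add fun ε hε => ?_
  have := hlt 0 (ε / -L 1) 0 le_rfl (div_pos hε (neg_pos.2 hone)) le_rfl
  rw [map_zero, mul_zero, zero_add, add_mul, div_neg, neg_mul, div_mul_cancel₀ _ hone.ne] at this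
  exact sub_lt_iff_lt_add.1 this

lemma exists_positiveLinearMap_forall_le {K : Set C(X, ℝ)} (hK : Convex ℝ K)
    (hne : K.Nonempty) {t : ℝ} (ht : ∀ g ∈ K, ∃ x, g x ≤ t) :
    ∃ Λ : C(X, ℝ) →ₚ[ℝ] ℝ, Λ 1 = 1 ∧ ∀ g ∈ K, Λ g ≤ t := by
  obtain ⟨L, hnonpos, hone, hle⟩ := exists_linearMap_nonpos_forall_mul_le hK hne ht
  refine ⟨.mk₀ ((L 1)⁻¹ • L) fun g hg =>
    mul_nonneg_of_nonpos_of_nonpos (inv_nonpos.2 hone.le) (hnonpos g hg),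
    inv_mul_cancel₀ hone.ne, fun g hg => ?_⟩
  change (L 1)⁻¹ * L g ≤ t
  rw [inv_mul_eq_div, div_le_iff_of_neg hone]
  exact hle g hg

variable [T2Space X] [MeasurableSpace X] [BorelSpace X]

lemma exists_probabilityMeasure_forall_integral_eq (Λ : C(X, ℝ) →ₚ[ℝ] ℝ) (hΛ : Λ 1 = 1) :
    ∃ μ : ProbabilityMeasure X, ∀ f : C(X, ℝ), ∫ x, f x ∂(μ : Measure X) = Λ f := by
  let Λc : CompactlySupportedContinuousMap X ℝ →ₚ[ℝ] ℝ :=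
    { toFun f := Λ f.toContinuousMap
      map_add' f g := map_add Λ f.toContinuousMap g.toContinuousMap
      map_smul' c f := map_smul Λ c f.toContinuousMap
      monotone' _ _ hfg := Λ.monotone' hfg }
  have hint (f : C(X, ℝ)) : ∫ x, f x ∂(RealRMK.rieszMeasure Λc) = Λ f :=
    RealRMK.integral_rieszMeasure Λc (CompactlySupportedContinuousMap.continuousMapEquiv f)
  have hprob : IsProbabilityMeasure (RealRMK.rieszMeasure Λc) := by
    rw [isProbabilityMeasure_iff_real, ← hΛ, ← hint 1]
    simp
  exact ⟨⟨_, hprob⟩, hint⟩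

theorem exists_probabilityMeasure_forall_integral_le {K : Set C(X, ℝ)} (hK : Convex ℝ K)
    (hne : K.Nonempty) {t : ℝ} (ht : ∀ g ∈ K, ∃ x, g x ≤ t) :
    ∃ μ : ProbabilityMeasure X, ∀ g ∈ K, ∫ x, g x ∂(μ : Measure X) ≤ t := by
  obtain ⟨Λ, hone, hle⟩ := exists_positiveLinearMap_forall_le hK hne ht
  obtain ⟨μ, hμ⟩ := exists_probabilityMeasure_forall_integral_eq Λ hone
  exact ⟨μ, fun g hg => (hμ g).trans_le (hle g hg)⟩

end Minimax

section Coboundary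

variable {X : Type*} [TopologicalSpace X]

/-- The coboundary operator `f ↦ f - f ∘ σ` of a dynamical system `σ`. A measure is
`σ`-invariant when it annihilates the range of this operator. -/
noncomputable def coboundary (σ : C(X, X)) : C(X, ℝ) →ₗ[ℝ] C(X, ℝ) :=
  LinearMap.id - (ContinuousMap.compRightAlgHom ℝ ℝ σ).toLinearMap

lemma coboundary_apply (σ : C(X, X)) (f : C(X, ℝ)) (x : X) :
    coboundary σ f x = f x - f (σ x) := rfl

variable [CompactSpace X] [MeasurableSpace X] [BorelSpace X] [HasOuterApproxClosed X]

lemma map_eq_self_iff_forall_integral_coboundary_eq_zero (σ : C(X, X)) (μ : Measure X)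
    [IsFiniteMeasure μ] :
    μ.map σ = μ ↔ ∀ f : C(X, ℝ), ∫ x, coboundary σ f x ∂μ = 0 := by
  have hmap (f : C(X, ℝ)) : ∫ x, f (σ x) ∂μ = ∫ x, f x ∂μ.map σ :=
    (integral_map σ.continuous.aemeasurable f.continuous.aestronglyMeasurable).symm
  have hcob (f : C(X, ℝ)) : ∫ x, coboundary σ f x ∂μ = ∫ x, f x ∂μ - ∫ x, f x ∂μ.map σ := by
    simp only [coboundary_apply, ← hmap]
    exact integral_sub (integrable_continuousMap f μ) (integrable_continuousMap (f.comp σ) μ)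
  refine ⟨fun h f => by rw [hcob, h, sub_self], fun h => ?_⟩
  refine ext_of_forall_integral_eq_of_IsFiniteMeasure fun f => ?_
  exact (sub_eq_zero.1 ((hcob f.toContinuousMap).symm.trans (h f.toContinuousMap))).symm

theorem exists_invariant_probabilityMeasure_forall_integral_le [T2Space X] (σ : C(X, X))
    {A : X → ℝ} (hA : BddBelow (Set.range A)) {t : ℝ}
    (ht : ∀ f : C(X, ℝ), ∃ x, f x - f (σ x) + A x ≤ t) :
    ∃ μ : ProbabilityMeasure X, (μ : Measure X).map σ = μ ∧
      ∀ h : C(X, ℝ), (∀ x, h x ≤ A x) → ∫ x, h x ∂(μ : Measure X) ≤ t := by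
  let M : Set C(X, ℝ) := {h | ∀ x, h x ≤ A x}
  obtain ⟨b, hb⟩ := hA
  have hbM : ContinuousMap.const X b ∈ M := fun x => hb ⟨x, rfl⟩
  obtain ⟨μ, hμ⟩ : ∃ μ : ProbabilityMeasure X,
      ∀ g ∈ (LinearMap.range (coboundary σ) : Set C(X, ℝ)) + M,
        ∫ x, g x ∂(μ : Measure X) ≤ t := by
    refine exists_probabilityMeasure_forall_integral_le
      ((LinearMap.range (coboundary σ)).convex.add
        (convex_setOfPred_forall_mem fun x => convex_Iic (A x)))
      (.add ⟨0, zero_mem _⟩ ⟨_, hbM⟩) ?_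
    rintro _ ⟨_, ⟨f, rfl⟩, h, hh, rfl⟩
    obtain ⟨x, hx⟩ := ht f
    exact ⟨x, (add_le_add_right (hh x) _).trans hx⟩
  have hsum (f h : C(X, ℝ)) (hh : h ∈ M) :
      ∫ x, coboundary σ f x ∂(μ : Measure X) + ∫ x, h x ∂(μ : Measure X) ≤ t := by
    rw [← integral_add (integrable_continuousMap _ _) (integrable_continuousMap _ _)]
    exact hμ _ (Set.add_mem_add ⟨f, rfl⟩ hh)
  have hnonpos (f : C(X, ℝ)) : ∫ x, coboundary σ f x ∂(μ : Measure X) ≤ 0 := by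
    refine nonpos_of_forall_mul_add_le (a := b) (u := t) fun s _ => ?_
    simpa [integral_const_mul] using hsum (s • f) _ hbM
  refine ⟨μ, (map_eq_self_iff_forall_integral_coboundary_eq_zero σ _).2 fun f =>
    (hnonpos f).antisymm ?_, fun h hh => by simpa using hsum 0 h hh⟩
  simpa [integral_neg] using hnonpos (-f)

lemma iInf_sub_comp_add_le_shiftedIntegral (σ : C(X, X)) (A : X → ℝ) (b : ℝ) {μ : Measure X}
    [IsProbabilityMeasure μ] (hμ : μ.map σ = μ) (f : C(X, ℝ)) :
    ⨅ x, ((f x - f (σ x) + A x : ℝ) : EReal) ≤ shiftedIntegral b A μ := by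
  refine EReal.ge_of_forall_gt_iff_ge.1 fun r hr => ?_
  let h : C(X, ℝ) := .const X r - coboundary σ f
  have hle (x : X) : h x ≤ A x := by
    have hx : r ≤ f x - f (σ x) + A x := by exact_mod_cast hr.le.trans (iInf_le _ x)
    exact sub_le_iff_le_add'.2 hx
  have hint : ∫ x, h x ∂μ = r := by
    calc ∫ x, h x ∂μ = ∫ _, r ∂μ - ∫ x, coboundary σ f x ∂μ :=
          integral_sub (integrable_const r) (integrable_continuousMap _ μ)
      _ = r := by
          rw [(map_eq_self_iff_forall_integral_coboundary_eq_zero σ μ).1 hμ f]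
          simp
  exact hint ▸ integral_le_shiftedIntegral (integrable_continuousMap h μ) hle b

end Coboundary

section Duality

variable {X : Type*} [MetricSpace X] [CompactSpace X] [MeasurableSpace X] [BorelSpace X]

theorem iInf_shiftedIntegral_eq_iSup_iInf (σ : C(X, X)) {A : X → ℝ}
    (hA : LowerSemicontinuous A) {b : ℝ} (hb : ∀ x, b ≤ A x) :
    ⨅ μ : {μ : ProbabilityMeasure X // (μ : Measure X).map σ = (μ : Measure X)},
        shiftedIntegral b A (μ : ProbabilityMeasure X) =
      ⨆ f : C(X, ℝ), ⨅ x : X, ((f x - f (σ x) + A x : ℝ) : EReal) := by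
  refine le_antisymm (EReal.le_of_forall_lt_iff_le.1 fun t ht => ?_) <|
    iSup_le fun f => le_iInf fun μ => iInf_sub_comp_add_le_shiftedIntegral σ A b μ.2 f
  have hmin (f : C(X, ℝ)) : ∃ x, f x - f (σ x) + A x ≤ t := by
    obtain ⟨x, hx⟩ := iInf_lt_iff.1 ((le_iSup _ f).trans_lt ht)
    exact ⟨x, by exact_mod_cast hx.le⟩
  obtain ⟨μ, hinv, hμ⟩ := exists_invariant_probabilityMeasure_forall_integral_le σ
    ⟨b, Set.forall_mem_range.2 hb⟩ hmin
  exact (iInf_le _ ⟨μ, hinv⟩).trans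
    (shiftedIntegral_le_of_forall_continuousMap_integral_le hA hb hμ)

end Duality

theorem stmt18_general {X : Type*} [MetricSpace X] [CompactSpace X]
    [MeasurableSpace X] [BorelSpace X]
    (σ : X → X) (hσc : Continuous σ)
    (A : X → ℝ) (hA : LowerSemicontinuous A)
    (b : ℝ) (hb : ∀ x, b ≤ A x)
    (val : MeasureTheory.ProbabilityMeasure X → EReal)
    (hval : ∀ μ : ProbabilityMeasure X,
      val μ = (b : EReal) +
        ((∫⁻ x, ENNReal.ofReal (A x - b) ∂(μ : Measure X) : ℝ≥0∞) : EReal))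
    (𝒯 : ProbabilityMeasure X → ProbabilityMeasure X → EReal)
    (h𝒯 : ∀ μ ν : ProbabilityMeasure X,
      𝒯 μ ν = if (μ : Measure X).map σ = (ν : Measure X) then val μ else ⊤) :
    (⨅ μ : ProbabilityMeasure X, 𝒯 μ μ) =
      (⨅ μ : {μ : ProbabilityMeasure X // (μ : Measure X).map σ = (μ : Measure X)},
        val μ) ∧
    (⨅ μ : ProbabilityMeasure X, 𝒯 μ μ) =
      ⨆ f : C(X, ℝ), ⨅ x : X, (((f x - f (σ x) + A x : ℝ)) : EReal) := by
  have hcost : (⨅ μ, 𝒯 μ μ) =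
      ⨅ μ : {μ : ProbabilityMeasure X // (μ : Measure X).map σ = (μ : Measure X)}, val μ := by
    simp only [h𝒯, iInf_subtype, iInf_eq_if]
  refine ⟨hcost, hcost.trans ?_⟩
  simp only [hval]
  exact iInf_shiftedIntegral_eq_iSup_iInf ⟨σ, hσc⟩ hA hb

/-- Let `X` be compact metric, `σ : X → X` continuous surjective, and
`A : X → ℝ` lower semi-continuous bounded below (by `b`). For the transfer
`𝒯(μ, ν) = ∫ A dμ` if `ν = σ_# μ` (and `+∞` otherwise), the Mather constant satisfies
`c(𝒯) = inf { ∫ A dμ : σ_# μ = μ } = sup_{f ∈ C(X)} inf_x { f(x) − f(σ(x)) + A(x) }`.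
The (possibly infinite) integral `∫ A dμ` is computed as `b + ∫⁻ (A − b) dμ`. -/
theorem stmt18 {X : Type*} [MetricSpace X] [CompactSpace X] [Nonempty X]
    [MeasurableSpace X] [BorelSpace X]
    (σ : X → X) (hσc : Continuous σ) (hσs : Function.Surjective σ)
    (A : X → ℝ) (hA : LowerSemicontinuous A)
    (b : ℝ) (hb : ∀ x, b ≤ A x)
    (val : MeasureTheory.ProbabilityMeasure X → EReal)
    (hval : ∀ μ : ProbabilityMeasure X,
      val μ = (b : EReal) +
        ((∫⁻ x, ENNReal.ofReal (A x - b) ∂(μ : Measure X) : ℝ≥0∞) : EReal))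
    (𝒯 : ProbabilityMeasure X → ProbabilityMeasure X → EReal)
    (h𝒯 : ∀ μ ν : ProbabilityMeasure X,
      𝒯 μ ν = if (μ : Measure X).map σ = (ν : Measure X) then val μ else ⊤) :
    (⨅ μ : ProbabilityMeasure X, 𝒯 μ μ) =
      (⨅ μ : {μ : ProbabilityMeasure X // (μ : Measure X).map σ = (μ : Measure X)},
        val μ) ∧
    (⨅ μ : ProbabilityMeasure X, 𝒯 μ μ) =
      ⨆ f : C(X, ℝ), ⨅ x : X, (((f x - f (σ x) + A x : ℝ)) : EReal) := by
  exact stmt18_general σ hσc A hA b hb val hval 𝒯 h𝒯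
end
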